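/- arXiv:2401.07373 — 2 statements merged into one kernel-verified Lean document; each statement's English description precedes it below -/
import Mathlib

section
/- Let M > M₁(Ω₁) and for ε ∈ (0, ε₀) let u^ε be the strictly k-convex solution of problem (2.1). For δ > 0, set U_δ = {x ∈ Ω^ε : dist(x, ∂Ω₁) < δ}. Then for every sufficiently small δ > 0 (small enough that U_δ stays away from B̄_{ε₀}(0)) there exists a constant C = C(δ) > 0, depending on δ, n, k, Ω₁ and M but independent of ε, such that |Du^ε| ≤ C in U_δ. -/
open Set Metric Filter Topology Bornology
open scoped RealInnerProductSpace

noncomputable section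

/-- Euclidean `n`-space. -/
abbrev Euc (n : ℕ) := EuclideanSpace ℝ (Fin n)

/-- The `k`-th elementary symmetric polynomial of a vector `lam ∈ ℝⁿ`. -/
def esymmVec {n : ℕ} (k : ℕ) (lam : Fin n → ℝ) : ℝ :=
  ∑ S ∈ Finset.powersetCard k (Finset.univ : Finset (Fin n)), ∏ i ∈ S, lam i

/-- `σ_k(A)`: the `k`-th elementary symmetric polynomial of the eigenvalues of a
symmetric matrix `A` (junk value `0` if `A` is not symmetric). -/
noncomputable def sigmaMat {n : ℕ} (k : ℕ) (A : Matrix (Fin n) (Fin n) ℝ) : ℝ := by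
  classical exact if h : A.IsHermitian then esymmVec k h.eigenvalues else 0

/-- The eigenvalues of the symmetric matrix `A` lie in the Gårding cone
`Γ_k = {λ : σ_j(λ) > 0, j = 1, …, k}`. -/
def InGardingCone {n : ℕ} (k : ℕ) (A : Matrix (Fin n) (Fin n) ℝ) : Prop :=
  ∃ h : A.IsHermitian, ∀ j : ℕ, 1 ≤ j → j ≤ k → 0 < esymmVec j h.eigenvalues

/-- The Hessian matrix of `u` at `x`, with derivatives taken within the set `s`. -/
noncomputable def hessianWithin {n : ℕ} (u : Euc n → ℝ) (s : Set (Euc n)) (x : Euc n) :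
    Matrix (Fin n) (Fin n) ℝ :=
  fun i j => iteratedFDerivWithin ℝ 2 u s x
    ![EuclideanSpace.single i (1:ℝ), EuclideanSpace.single j (1:ℝ)]

/-- The Hessian matrix `D²u(x)` of `u` at `x`. -/
noncomputable def hessian {n : ℕ} (u : Euc n → ℝ) (x : Euc n) : Matrix (Fin n) (Fin n) ℝ :=
  fun i j => iteratedFDeriv ℝ 2 u x
    ![EuclideanSpace.single i (1:ℝ), EuclideanSpace.single j (1:ℝ)]

/-- Operator norm of the Hessian matrix of `u` at `x` (derivatives within `s`). -/
noncomputable def hessOpNormWithin {n : ℕ} (u : Euc n → ℝ) (s : Set (Euc n)) (x : Euc n) : ℝ :=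
  ‖Matrix.toEuclideanCLM (𝕜 := ℝ) (hessianWithin u s x)‖

/-- A set has smooth boundary: it is the sublevel set of a smooth defining function
with nonvanishing differential on the boundary. -/
def HasSmoothBoundary {n : ℕ} (Ω : Set (Euc n)) : Prop :=
  ∃ ρ : Euc n → ℝ, ContDiff ℝ (⊤ : ℕ∞) ρ ∧ Ω = {x | ρ x < 0} ∧
    ∀ x ∈ frontier Ω, fderiv ℝ ρ x ≠ 0

/-- `c_{n,k} = (C(n,k))^{1/k}` where `C(n,k)` is the binomial coefficient. -/
noncomputable def cnk (n k : ℕ) : ℝ := (n.choose k : ℝ) ^ ((1:ℝ)/(k:ℝ))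

/-- The radially symmetric subsolution `|x - x₀|²/(2c_{n,k}) − ε²/(2c_{n,k}) − M`. -/
noncomputable def underSol {n : ℕ} (k : ℕ) (x₀ : Euc n) (ε M : ℝ) (x : Euc n) : ℝ :=
  ‖x - x₀‖^2 / (2 * cnk n k) - ε^2 / (2 * cnk n k) - M

/-- The closed ring `Ω̄^ε = closure (Ω₁ \ B̄_ε(x₀))`. -/
def ringSet {n : ℕ} (Ω₁ : Set (Euc n)) (x₀ : Euc n) (ε : ℝ) : Set (Euc n) :=
  closure (Ω₁ \ closedBall x₀ ε)

/-- `u` is a strictly `k`-convex solution of problem (2.1):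
`σ_k(D²u) = 1` in `Ω^ε = Ω₁ \ B̄_ε(x₀)`, `u = 0` on `∂Ω₁`, `u = −M` on `∂B_ε(x₀)`,
with `u ∈ C²(Ω̄^ε)`. -/
def IsSol {n : ℕ} (k : ℕ) (Ω₁ : Set (Euc n)) (x₀ : Euc n) (ε M : ℝ) (u : Euc n → ℝ) : Prop :=
  ContDiffOn ℝ 2 u (ringSet Ω₁ x₀ ε) ∧
  (∀ x ∈ Ω₁ \ closedBall x₀ ε,
      InGardingCone k (hessianWithin u (ringSet Ω₁ x₀ ε) x) ∧
      sigmaMat k (hessianWithin u (ringSet Ω₁ x₀ ε) x) = 1) ∧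
  (∀ x ∈ frontier Ω₁, u x = 0) ∧
  (∀ x ∈ sphere x₀ ε, u x = -M)

/-- `ψ` is a strictly `k`-convex solution of problem (2.2):
`σ_k(D²ψ) = 1` in `Ω₁`, `ψ = 0` on `∂Ω₁`, with `ψ ∈ C^∞(Ω̄₁)`. -/
def IsSol22 {n : ℕ} (k : ℕ) (Ω₁ : Set (Euc n)) (ψ : Euc n → ℝ) : Prop :=
  ContDiffOn ℝ (⊤ : ℕ∞) ψ (closure Ω₁) ∧
  (∀ x ∈ Ω₁, InGardingCone k (hessianWithin ψ (closure Ω₁) x) ∧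
      sigmaMat k (hessianWithin ψ (closure Ω₁) x) = 1) ∧
  (∀ x ∈ frontier Ω₁, ψ x = 0)

/-- `u` is a strictly `k`-convex solution of the Dirichlet problem on the convex ring
`Ω = Ω₁ \ Ω̄₂`: `σ_k(D²u) = 1` in `Ω`, `u = 0` on `∂Ω₁`, `u = −M` on `∂Ω₂`,
with `u ∈ C²(Ω̄)`. -/
def IsSolRing {n : ℕ} (k : ℕ) (Ω₁ Ω₂ : Set (Euc n)) (M : ℝ) (u : Euc n → ℝ) : Prop :=
  ContDiffOn ℝ 2 u (closure (Ω₁ \ closure Ω₂)) ∧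
  (∀ x ∈ Ω₁ \ closure Ω₂,
      InGardingCone k (hessianWithin u (closure (Ω₁ \ closure Ω₂)) x) ∧
      sigmaMat k (hessianWithin u (closure (Ω₁ \ closure Ω₂)) x) = 1) ∧
  (∀ x ∈ frontier Ω₁, u x = 0) ∧
  (∀ x ∈ frontier Ω₂, u x = -M)

/-- The extension `ũ` of `u`, equal to `−M` on the closed ball `B̄_ε(x₀)`. -/
noncomputable def extendBy {n : ℕ} (u : Euc n → ℝ) (x₀ : Euc n) (ε M : ℝ) (x : Euc n) : ℝ := by
  classical exact if x ∈ closedBall x₀ ε then -M else u x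

/-- The extension `ũ` of `u`, equal to `−M` on the set `Ω₂`. -/
noncomputable def extendOn {n : ℕ} (u : Euc n → ℝ) (Ω₂ : Set (Euc n)) (M : ℝ) (x : Euc n) : ℝ := by
  classical exact if x ∈ Ω₂ then -M else u x

/-- The quadratic polynomial with Hessian `A`, linear part `b` and constant term `c`. -/
noncomputable def quadPoly {n : ℕ} (A : Matrix (Fin n) (Fin n) ℝ) (b : Euc n) (c : ℝ)
    (x : Euc n) : ℝ :=
  (∑ i, ∑ j, A i j * x i * x j) / 2 + ⟪b, x⟫ + c

namespace S7
open Polynomial Matrix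

lemma splits_derivative {p : ℝ[X]} (hp : p.Splits) : p.derivative.Splits := by
  by_cases h0 : p.natDegree = 0
  · rw [natDegree_eq_zero.1 h0 |>.choose_spec.symm]; simp
  · have h1 := card_roots_le_derivative p
    have h2 := splits_iff_card_roots.1 hp
    have h3 := natDegree_derivative_lt h0
    have h4 := card_roots' (derivative p)
    rw [splits_iff_card_roots]; omega

lemma laguerre {p : ℝ[X]} (hp : p.Splits) (x : ℝ) :
    p.eval x * p.derivative.derivative.eval x ≤ (p.derivative.eval x) ^ 2 := by
  have key : ∀ (m : Multiset ℝ) (c : ℝ), let q := C c * (m.map (fun a => X - C a)).prod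
      q.eval x * q.derivative.derivative.eval x ≤ (q.derivative.eval x) ^ 2 := by
    intro m c
    induction m using Multiset.induction_on with
    | empty => simp
    | cons a m ih =>
      intro q
      set r := C c * (m.map (fun a => X - C a)).prod with hr
      have hq : q = (X - C a) * r := by simp [q, hr]; ring
      rw [hq]
      simp only [derivative_mul, derivative_sub, derivative_X, derivative_C, sub_zero, one_mul,
        derivative_add, eval_add, eval_mul, eval_sub, eval_X, eval_C] at ih ⊢
      nlinarith [mul_nonneg (sq_nonneg (x - a)) (sub_nonneg.2 ih), sq_nonneg (r.eval x)]
  have := key p.roots p.leadingCoeff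
  rw [← hp.eq_prod_roots] at this
  exact this

lemma newton {p : ℝ[X]} (hp : p.Splits) (j : ℕ) :
    p.coeff j * p.coeff (j + 2) ≤ (p.coeff (j + 1)) ^ 2 := by
  have hq : (derivative^[j] p).Splits := by
    induction j with
    | zero => exact hp
    | succ j ih => rw [Function.iterate_succ_apply']; exact splits_derivative ih
  have h := laguerre hq 0
  rw [← coeff_zero_eq_eval_zero, ← coeff_zero_eq_eval_zero, ← coeff_zero_eq_eval_zero] at h
  simp only [coeff_derivative, coeff_iterate_derivative, zero_add] at h
  norm_num at h
  have e1 : ((j.descFactorial j : ℕ) : ℝ) = (j.factorial : ℝ) := by rw [Nat.descFactorial_self]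
  have e2 : (((1 + j).descFactorial j : ℕ) : ℝ) = (j + 1) * (j.factorial : ℝ) := by
    have := Nat.factorial_mul_descFactorial (n := 1 + j) (k := j) (by omega)
    rw [show 1 + j - j = 1 by omega, add_comm 1 j, Nat.factorial_succ j] at this
    rw [add_comm 1 j]
    have := congrArg (Nat.cast (R := ℝ)) this
    push_cast at this
    simpa using this
  have e3 : 2 * (((2 + j).descFactorial j : ℕ) : ℝ) = (j + 2) * ((j + 1) * (j.factorial : ℝ)) := by
    have := Nat.factorial_mul_descFactorial (n := 2 + j) (k := j) (by omega)
    rw [show 2 + j - j = 2 by omega, add_comm 2 j, Nat.factorial_succ (j + 1), Nat.factorial_succ j] at this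
    rw [add_comm 2 j]
    have := congrArg (Nat.cast (R := ℝ)) this
    push_cast at this
    norm_num [Nat.factorial] at this
    linarith
  have hf : (0 : ℝ) < j.factorial := by exact_mod_cast j.factorial_pos
  by_cases hn : p.coeff j * p.coeff (j + 2) ≤ 0
  · exact hn.trans (sq_nonneg _)
  push Not at hn
  have h' : (j.factorial : ℝ) ^ 2 * (j + 1) * ((j + 2) * (p.coeff j * p.coeff (j + 2)))
      ≤ (j.factorial : ℝ) ^ 2 * (j + 1) * ((j + 1) * (p.coeff (j + 1)) ^ 2) := by
    have e4 : p.coeff (2 + j) = p.coeff (j + 2) := by rw [add_comm]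
    have e5 : p.coeff (1 + j) = p.coeff (j + 1) := by rw [add_comm]
    rw [e1, e2, e4, e5] at h
    have : ((2 + j).descFactorial j : ℝ) = (j + 2) * ((j + 1) * (j.factorial : ℝ)) / 2 := by linarith
    rw [this] at h
    nlinarith [h]
  have h'' := le_of_mul_le_mul_left h' (by positivity)
  have hj : (0 : ℝ) ≤ j := Nat.cast_nonneg j
  nlinarith

lemma cone_del {p q : ℝ[X]} {l : ℝ} (hpq : p = (1 + C l * X) * q) (hq : q.Splits)
    (hq0 : q.coeff 0 = 1) {k : ℕ} (hp : ∀ j, 1 ≤ j → j ≤ k → 0 < p.coeff j) :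
    ∀ j, j < k → 0 < q.coeff j := by
  have hc : ∀ j, p.coeff (j + 1) = q.coeff (j + 1) + l * q.coeff j := by
    intro j
    rw [hpq, add_mul, one_mul, mul_assoc, coeff_add, coeff_C_mul, coeff_X_mul]
  intro j
  induction j with
  | zero => intro; rw [hq0]; norm_num
  | succ j ih =>
    intro hj
    have h1 := ih (by omega)
    have h2 := hp (j + 1) (by omega) (by omega)
    have h3 := hp (j + 2) (by omega) (by omega)
    rw [hc] at h2
    rw [show j + 2 = (j + 1) + 1 from rfl, hc] at h3
    have h4 := newton hq j
    by_contra hneg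
    push Not at hneg
    rw [show j + 1 + 1 = j + 2 from rfl] at h3
    nlinarith [mul_pos h1 h3, mul_nonneg (neg_nonneg.2 hneg) h2.le]

/-- generating polynomial -/
def P {n : ℕ} (A : Matrix (Fin n) (Fin n) ℝ) : ℝ[X] := charpolyRev (-A)

lemma P_eval {n : ℕ} (A : Matrix (Fin n) (Fin n) ℝ) (t : ℝ) : (P A).eval t = (1 + t • A).det := by
  rw [P, charpolyRev, ← coe_evalRingHom, RingHom.map_det]
  congr 1
  ext i j
  simp [Matrix.one_apply, apply_ite, mul_comm (A i j)]

lemma P_ext {n : ℕ} {A : Matrix (Fin n) (Fin n) ℝ} {q : ℝ[X]}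
    (h : ∀ t, (1 + t • A).det = q.eval t) : P A = q :=
  Polynomial.funext fun t => by rw [P_eval, h]

lemma P_conj {n : ℕ} (A U V : Matrix (Fin n) (Fin n) ℝ) (h : U * V = 1) :
    P (U * A * V) = P A := by
  apply P_ext
  intro t
  rw [P_eval]
  have : 1 + t • (U * A * V) = U * (1 + t • A) * V := by
    rw [Matrix.mul_add, Matrix.add_mul, Matrix.mul_one, h]; simp
  rw [this, det_mul, det_mul]
  have := congrArg det h
  rw [det_mul, det_one] at this
  linear_combination (1 + t • A).det * this

lemma P_diag {n : ℕ} (l : Fin n → ℝ) : P (diagonal l) = ∏ i, (1 + C (l i) * X) := by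
  apply P_ext
  intro t
  have : (1 : Matrix (Fin n) (Fin n) ℝ) + t • diagonal l = diagonal (fun i => 1 + t * l i) := by
    rw [← diagonal_one, ← diagonal_smul, diagonal_add]; rfl
  rw [this, det_diagonal, eval_prod]
  refine Finset.prod_congr rfl fun i _ => ?_
  simp only [eval_add, eval_one, eval_mul, eval_C, eval_X, mul_comm t]

lemma P_diag_rank {n : ℕ} (l v : Fin n → ℝ) : P (diagonal l + vecMulVec v v) =
    ∏ i, (1 + C (l i) * X) +
      ∑ i, C ((v i) ^ 2) * X * ∏ j ∈ Finset.univ.erase i, (1 + C (l j) * X) := by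
  have hne : (∏ i, (1 + C (l i) * X)) ≠ 0 := by
    intro h
    have := congrArg (eval 0) h
    simp [eval_prod] at this
  apply Polynomial.eq_of_infinite_eval_eq
  have hfin : {t | (∏ i, (1 + C (l i) * X)).IsRoot t}.Finite := by
    exact finite_setOfPred_isRoot hne
  refine Set.Infinite.mono ?_ hfin.infinite_compl
  intro t ht
  simp only [Set.mem_compl_iff, Set.mem_ofPred_eq, IsRoot.def, eval_prod] at ht
  rw [Finset.prod_eq_zero_iff] at ht
  push Not at ht
  simp only [eval_add, eval_one, eval_mul, eval_C, eval_X] at ht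
  have ht : ∀ i, 1 + l i * t ≠ 0 := fun i => ht i (Finset.mem_univ i)
  show eval t _ = eval t _
  rw [P_eval]
  have e : (1 : Matrix (Fin n) (Fin n) ℝ) + t • (diagonal l + vecMulVec v v) =
      diagonal (fun i => 1 + l i * t) +
        replicateCol Unit (t • v) * replicateRow Unit v := by
    ext i j
    simp [Matrix.mul_apply, vecMulVec_apply, Matrix.one_apply, diagonal_apply]
    split_ifs <;> ring
  have hdet : IsUnit (diagonal (fun i => 1 + l i * t)).det := by
    rw [det_diagonal, isUnit_iff_ne_zero, Finset.prod_ne_zero_iff]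
    exact fun i _ => ht i
  rw [e, det_add_replicateCol_mul_replicateRow hdet, det_diagonal]
  have hinv : (diagonal (fun i => 1 + l i * t))⁻¹ = diagonal (fun i => (1 + l i * t)⁻¹) := by
    apply inv_eq_right_inv
    rw [diagonal_mul_diagonal, ← diagonal_one]
    congr 1; funext i; exact mul_inv_cancel₀ (ht i)
  rw [hinv, det_unique]
  simp [eval_prod, eval_finsetSum, Matrix.mul_apply, mul_add, Finset.mul_sum]
  apply Finset.sum_congr rfl
  intro i _
  rw [← Finset.mul_prod_erase Finset.univ _ (Finset.mem_univ i)]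
  have hs : ∑ x, v x * Matrix.diagonal (fun i => (1 + l i * t)⁻¹) x i = v i * (1 + l i * t)⁻¹ := by
    rw [Finset.sum_eq_single i]
    · simp
    · intro b _ hb; simp [hb]
    · simp
  rw [hs]
  have := ht i
  field_simp

lemma P_eig {n : ℕ} {A : Matrix (Fin n) (Fin n) ℝ} (h : A.IsHermitian) :
    P A = ∏ i, (1 + C (h.eigenvalues i) * X) := by
  rw [← P_diag]
  have := h.spectral_theorem
  conv_lhs => rw [this, Unitary.conjStarAlgAut_apply]
  rw [P_conj]
  · rfl
  · exact Unitary.coe_mul_star_self _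

lemma esymm_eq {n : ℕ} (k : ℕ) (l : Fin n → ℝ) :
    (∏ i, (1 + C (l i) * X)).coeff k = esymmVec k l := by
  rw [Finset.prod_one_add, finsetSum_coeff, esymmVec, Finset.powersetCard_eq_filter,
    Finset.sum_filter]
  apply Finset.sum_congr rfl
  intro t _
  rw [Finset.prod_mul_distrib, Finset.prod_const, ← map_prod, coeff_C_mul, coeff_X_pow]
  simp only [eq_comm (a := k)]
  split_ifs <;> simp

/-- cone membership -/
def Cone {n : ℕ} (k : ℕ) (A : Matrix (Fin n) (Fin n) ℝ) : Prop :=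
  A.IsHermitian ∧ ∀ j : ℕ, 1 ≤ j → j ≤ k → 0 < (P A).coeff j

lemma cone_of {n k : ℕ} {A : Matrix (Fin n) (Fin n) ℝ} (h : InGardingCone k A) : Cone k A := by
  obtain ⟨h, h'⟩ := h
  exact ⟨h, fun j h1 h2 => by rw [P_eig h, esymm_eq]; exact h' j h1 h2⟩

lemma sigma_of {n k : ℕ} {A : Matrix (Fin n) (Fin n) ℝ} (h : InGardingCone k A) :
    (P A).coeff k = sigmaMat k A := by
  obtain ⟨h, h'⟩ := h
  rw [P_eig h, esymm_eq, sigmaMat, dif_pos h]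

lemma cone_rank {n k : ℕ} {A : Matrix (Fin n) (Fin n) ℝ} (hA : Cone k A) (v : Fin n → ℝ) :
    Cone k (A + vecMulVec v v) ∧
    (∀ j, 1 ≤ j → j ≤ k → (P A).coeff j ≤ (P (A + vecMulVec v v)).coeff j) ∧
    (v ≠ 0 → ∀ j, 1 ≤ j → j ≤ k → (P A).coeff j < (P (A + vecMulVec v v)).coeff j) := by
  obtain ⟨h, hc⟩ := hA
  set l := h.eigenvalues
  set U : Matrix (Fin n) (Fin n) ℝ := (h.eigenvectorUnitary : Matrix (Fin n) (Fin n) ℝ)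
  have hU : U * star U = 1 := Unitary.coe_mul_star_self _
  have hU' : star U * U = 1 := Unitary.coe_star_mul_self _
  have hA : A = U * diagonal l * star U := by
    have := h.spectral_theorem
    rw [Unitary.conjStarAlgAut_apply] at this
    exact this
  set w := star U *ᵥ v with hw
  have hvw : v = U *ᵥ w := by rw [hw, mulVec_mulVec, hU, one_mulVec]
  have hE : A + vecMulVec v v = U * (diagonal l + vecMulVec w w) * star U := by
    rw [Matrix.mul_add, Matrix.add_mul, ← hA, mul_vecMulVec, vecMulVec_mul, ← hvw]
    congr 2
    rw [Matrix.star_eq_conjTranspose, conjTranspose_eq_transpose_of_trivial, vecMul_transpose, ← hvw]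
  have hP : P (A + vecMulVec v v) = ∏ i, (1 + C (l i) * X) +
      ∑ i, C ((w i) ^ 2) * X * ∏ j ∈ Finset.univ.erase i, (1 + C (l j) * X) := by
    rw [hE, P_conj _ _ _ hU, P_diag_rank]
  have hPA : P A = ∏ i, (1 + C (l i) * X) := P_eig h
  have hpos : ∀ i, ∀ j, j < k → 0 < (∏ j ∈ Finset.univ.erase i, (1 + C (l j) * X)).coeff j := by
    intro i
    apply cone_del (p := P A) (l := l i)
    · rw [hPA]; exact (Finset.mul_prod_erase Finset.univ (fun i => 1 + C (l i) * X) (Finset.mem_univ i)).symm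
    · apply Splits.prod
      intro j _
      rw [add_comm, ← C_1]
      exact Splits.of_natDegree_le_one natDegree_linear_le
    · rw [coeff_zero_eq_eval_zero, eval_prod]; simp
    · exact hc
  have hco : ∀ j, (P (A + vecMulVec v v)).coeff (j + 1) = (P A).coeff (j + 1) +
      ∑ i, (w i) ^ 2 * (∏ j ∈ Finset.univ.erase i, (1 + C (l j) * X)).coeff j := by
    intro j
    rw [hP, coeff_add, finsetSum_coeff, hPA]
    congr 1
    apply Finset.sum_congr rfl
    intro i _
    rw [mul_assoc, coeff_C_mul, coeff_X_mul]
  have hle : ∀ j, 1 ≤ j → j ≤ k → (P A).coeff j ≤ (P (A + vecMulVec v v)).coeff j := by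
    intro j h1 h2
    obtain ⟨j, rfl⟩ := Nat.exists_eq_add_of_le' h1
    rw [hco]
    have := Finset.sum_nonneg (s := Finset.univ) (fun i _ => mul_nonneg (sq_nonneg (w i)) (hpos i j (by omega)).le)
    linarith
  refine ⟨⟨?_, fun j h1 h2 => (hc j h1 h2).trans_le (hle j h1 h2)⟩, hle, ?_⟩
  · apply h.add
    rw [Matrix.IsHermitian, conjTranspose_eq_transpose_of_trivial, transpose_vecMulVec]
  · intro hv j h1 h2
    obtain ⟨j, rfl⟩ := Nat.exists_eq_add_of_le' h1
    rw [hco]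
    have : ∃ i, w i ≠ 0 := by
      by_contra hcon
      push Not at hcon
      apply hv
      rw [hvw, show w = 0 from funext hcon, mulVec_zero]
    obtain ⟨i, hi⟩ := this
    have := Finset.sum_pos' (s := Finset.univ) (fun i _ => mul_nonneg (sq_nonneg (w i)) (hpos i j (by omega)).le)
      ⟨i, Finset.mem_univ i, mul_pos (by positivity) (hpos i j (by omega))⟩
    linarith

lemma cone_psd {n k : ℕ} {A Q : Matrix (Fin n) (Fin n) ℝ} (hA : Cone k A) (hQ : Q.PosSemidef) :
    Cone k (A + Q) ∧ (∀ j, 1 ≤ j → j ≤ k → (P A).coeff j ≤ (P (A + Q)).coeff j) := by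
  obtain ⟨m, v, rfl⟩ := Matrix.posSemidef_iff_eq_sum_vecMulVec.1 hQ
  have : ∀ s : Finset (Fin m), Cone k (A + ∑ i ∈ s, vecMulVec (v i) (star (v i))) ∧
      (∀ j, 1 ≤ j → j ≤ k → (P A).coeff j ≤
        (P (A + ∑ i ∈ s, vecMulVec (v i) (star (v i)))).coeff j) := by
    intro s
    induction s using Finset.induction_on with
    | empty => simpa using hA
    | insert a s ha ih =>
      rw [Finset.sum_insert ha, add_comm (vecMulVec _ _), ← add_assoc]
      have h := cone_rank ih.1 (v a)
      have hs : star (v a) = v a := by ext; simp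
      rw [hs]
      exact ⟨h.1, fun j h1 h2 => (ih.2 j h1 h2).trans (h.2.1 j h1 h2)⟩
  exact this Finset.univ

lemma sigma_strict {n k : ℕ} (hk : 1 ≤ k) (hkn : k ≤ n) {A B : Matrix (Fin n) (Fin n) ℝ}
    (hA : Cone k A) (hB : B.IsHermitian) {τ : ℝ} (hτ : 0 < τ)
    (h : ∀ w : Fin n → ℝ, w ⬝ᵥ A *ᵥ w - w ⬝ᵥ B *ᵥ w + τ * (w ⬝ᵥ w) ≤ 0) :
    (P A).coeff k < (P B).coeff k := by
  let i0 : Fin n := ⟨0, by omega⟩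
  let v : Fin n → ℝ := Pi.single i0 (√τ)
  have hv : v ≠ 0 := by
    intro h
    have := congrFun h i0
    simp [v] at this
    exact absurd (Real.sqrt_eq_zero'.1 this) (by linarith)
  have h1 := cone_rank hA v
  have hQ : (B - (A + vecMulVec v v)).PosSemidef := by
    apply PosSemidef.of_dotProduct_mulVec_nonneg
    · exact hB.sub h1.1.1
    · intro w
      have := h w
      have hs : star w = w := by ext; simp
      have e : w ⬝ᵥ (vecMulVec v v) *ᵥ w = τ * (w i0) ^ 2 := by
        rw [vecMulVec_mulVec]
        simp [v]
        have := Real.sq_sqrt hτ.le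
        linear_combination (w i0)^2 * this
      have e2 : (w i0) ^ 2 ≤ w ⬝ᵥ w := by
        rw [dotProduct, sq]
        exact Finset.single_le_sum (f := fun i => w i * w i) (fun i _ => mul_self_nonneg _) (Finset.mem_univ i0)
      rw [hs, sub_mulVec, add_mulVec, dotProduct_sub, dotProduct_add, e]
      nlinarith
  have h2 := cone_psd h1.1 hQ
  rw [add_sub_cancel] at h2
  exact (h1.2.2 hv k hk le_rfl).trans_le (h2.2 k hk le_rfl)

lemma P_smul {n : ℕ} (K : ℝ) (A : Matrix (Fin n) (Fin n) ℝ) (j : ℕ) :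
    (P (K • A)).coeff j = K ^ j * (P A).coeff j := by
  have : P (K • A) = (P A).comp (C K * X) := by
    apply P_ext
    intro t
    rw [eval_comp, P_eval]
    simp only [smul_smul, eval_mul, eval_C, eval_X, mul_comm t]
  rw [this, comp_C_mul_X_coeff, mul_comm]

lemma P_one {n : ℕ} (j : ℕ) : (P (1 : Matrix (Fin n) (Fin n) ℝ)).coeff j = n.choose j := by
  rw [← diagonal_one, P_diag]
  simp [coeff_one_add_X_pow]

lemma P_trace {n : ℕ} (A : Matrix (Fin n) (Fin n) ℝ) : (P A).coeff 1 = A.trace := by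
  simp [P]

end S7
namespace S7
open Matrix

/-- second derivative along a line -/
def Sec {n : ℕ} (f : Euc n → ℝ) (x w : Euc n) (d : ℝ) : Prop :=
  ∃ φ : ℝ → ℝ, (∀ᶠ t in 𝓝 (0 : ℝ), HasDerivAt (fun t : ℝ => f (x + t • w)) (φ t) t) ∧
    HasDerivAt φ d 0

lemma Sec.add {n : ℕ} {f g : Euc n → ℝ} {x w : Euc n} {d e : ℝ} (hf : Sec f x w d)
    (hg : Sec g x w e) : Sec (fun x => f x + g x) x w (d + e) := by
  obtain ⟨φ, h1, h2⟩ := hf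
  obtain ⟨χ, h3, h4⟩ := hg
  refine ⟨fun t => φ t + χ t, ?_, h2.add h4⟩
  filter_upwards [h1, h3] with t a b using a.add b

lemma Sec.smul {n : ℕ} {f : Euc n → ℝ} {x w : Euc n} {d : ℝ} (c : ℝ) (hf : Sec f x w d) :
    Sec (fun x => c * f x) x w (c * d) := by
  obtain ⟨φ, h1, h2⟩ := hf
  refine ⟨fun t => c * φ t, ?_, h2.const_mul c⟩
  filter_upwards [h1] with t a using a.const_mul c

lemma Sec.const {n : ℕ} (c : ℝ) (x w : Euc n) : Sec (fun _ => c) x w 0 :=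
  ⟨fun _ => 0, Eventually.of_forall fun t => hasDerivAt_const t c, hasDerivAt_const _ _⟩

lemma Sec.comp {n : ℕ} {f : Euc n → ℝ} {x w : Euc n} {d : ℝ} (T : Euc n →ₗ[ℝ] Euc n)
    (hf : Sec f (T x) (T w) d) : Sec (fun x => f (T x)) x w d := by
  obtain ⟨φ, h1, h2⟩ := hf
  refine ⟨φ, ?_, h2⟩
  simpa using h1

lemma normsq_line {n : ℕ} (x w : Euc n) (t : ℝ) :
    HasDerivAt (fun t : ℝ => ‖x + t • w‖ ^ 2) (2 * ⟪x, w⟫ + 2 * t * ‖w‖ ^ 2) t := by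
  have h : (fun t : ℝ => ‖x + t • w‖ ^ 2) =
      fun t : ℝ => ‖x‖ ^ 2 + 2 * (t * ⟪x, w⟫) + t ^ 2 * ‖w‖ ^ 2 := by
    funext t
    rw [norm_add_sq_real, inner_smul_right, norm_smul, mul_pow, Real.norm_eq_abs, sq_abs]
  rw [h]
  have := ((((hasDerivAt_id t).mul_const ⟪x, w⟫).const_mul 2).const_add (‖x‖ ^ 2)).add
    (((hasDerivAt_id t).pow 2).mul_const (‖w‖ ^ 2))
  refine HasDerivAt.congr_deriv this ?_
  simp

lemma Sec.normsq {n : ℕ} (x w : Euc n) : Sec (fun x => ‖x‖ ^ 2) x w (2 * ‖w‖ ^ 2) := by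
  refine ⟨fun t => 2 * ⟪x, w⟫ + 2 * t * ‖w‖ ^ 2, Eventually.of_forall fun t => normsq_line x w t, ?_⟩
  have := (((hasDerivAt_id (0 : ℝ)).const_mul 2).mul_const (‖w‖ ^ 2)).const_add (2 * ⟪x, w⟫)
  refine HasDerivAt.congr_deriv this ?_
  simp

lemma Sec.expn {n : ℕ} (b : ℝ) (x w : Euc n) : Sec (fun x => Real.exp (-b * ‖x‖ ^ 2)) x w
    ((4 * b ^ 2 * ⟪x, w⟫ ^ 2 - 2 * b * ‖w‖ ^ 2) * Real.exp (-b * ‖x‖ ^ 2)) := by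
  have h1 : ∀ t : ℝ, HasDerivAt (fun t : ℝ => Real.exp (-b * ‖x + t • w‖ ^ 2))
      (Real.exp (-b * ‖x + t • w‖ ^ 2) * (-b * (2 * ⟪x, w⟫ + 2 * t * ‖w‖ ^ 2))) t :=
    fun t => ((normsq_line x w t).const_mul (-b)).exp
  refine ⟨_, Eventually.of_forall h1, ?_⟩
  have h2 : HasDerivAt (fun t : ℝ => -b * (2 * ⟪x, w⟫ + 2 * t * ‖w‖ ^ 2)) (-b * (2 * ‖w‖ ^ 2)) 0 := by
    have := ((((hasDerivAt_id (0 : ℝ)).const_mul 2).mul_const (‖w‖ ^ 2)).const_add (2 * ⟪x, w⟫)).const_mul (-b)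
    refine HasDerivAt.congr_deriv this ?_
    simp
  have h3 := (h1 0).mul h2
  refine HasDerivAt.congr_deriv h3 ?_
  simp
  ring

lemma Sec.localMax {n : ℕ} {f : Euc n → ℝ} {x w : Euc n} {d : ℝ} (hf : Sec f x w d)
    (hm : IsLocalMax f x) : d ≤ 0 := by
  obtain ⟨φ, h1, h2⟩ := hf
  by_contra hd
  push Not at hd
  set g := fun t : ℝ => f (x + t • w) with hg
  have hgm : IsLocalMax g 0 := by
    have hc : Tendsto (fun t : ℝ => x + t • w) (𝓝 0) (𝓝 x) := by
      have : Continuous (fun t : ℝ => x + t • w) := by fun_prop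
      simpa using this.tendsto 0
    have := hc.eventually hm
    filter_upwards [this] with t ht
    simpa [g] using ht
  have hde : deriv g =ᶠ[𝓝 0] φ := by
    filter_upwards [h1] with t ht using ht.deriv
  have hdd : deriv (deriv g) 0 = d := by rw [hde.deriv_eq, h2.deriv]
  have hmin : IsLocalMin g 0 := isLocalMin_of_deriv_deriv_pos (by rw [hdd]; exact hd)
    hgm.deriv_eq_zero h1.self_of_nhds.continuousAt
  have hconst : g =ᶠ[𝓝 0] fun _ => g 0 := by
    filter_upwards [hgm, hmin] with t a b using le_antisymm a b
  have : deriv g =ᶠ[𝓝 0] fun _ => 0 := by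
    have := hconst.deriv
    simpa using this
  have := this.deriv_eq
  rw [hdd] at this
  simp at this
  linarith

lemma Sec.of_contDiff {n : ℕ} {u : Euc n → ℝ} {s : Set (Euc n)} {x : Euc n}
    (hs : s ∈ 𝓝 x) (hu : ContDiffOn ℝ 2 u s) (w : Euc n) :
    Sec u x w (w.ofLp ⬝ᵥ hessianWithin u s x *ᵥ w.ofLp) := by
  have hux : ContDiffAt ℝ 2 u x := hu.contDiffAt hs
  have hf : ContDiffAt ℝ 1 (fderiv ℝ u) x := hux.fderiv_right (by norm_num)
  have hfd : DifferentiableAt ℝ (fderiv ℝ u) x := hf.differentiableAt (by norm_num)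
  have hh : ∀ i j, hessianWithin u s x i j = fderiv ℝ (fderiv ℝ u) x
      (EuclideanSpace.single i (1:ℝ)) (EuclideanSpace.single j (1:ℝ)) := by
    intro i j
    rw [hessianWithin, iteratedFDerivWithin_congr_set (eventuallyEq_univ.2 hs), iteratedFDerivWithin_univ,
      iteratedFDeriv_two_apply]
    simp
  have hline : ∀ t : ℝ, HasDerivAt (fun t : ℝ => x + t • w) w t := by
    intro t
    simpa using ((hasDerivAt_id t).smul_const w).const_add x
  have hc : Tendsto (fun t : ℝ => x + t • w) (𝓝 0) (𝓝 x) := by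
    have : Continuous (fun t : ℝ => x + t • w) := by fun_prop
    simpa using this.tendsto 0
  refine ⟨fun t => fderiv ℝ u (x + t • w) w, ?_, ?_⟩
  · have hev : ∀ᶠ y in 𝓝 x, DifferentiableAt ℝ u y := by
      filter_upwards [hux.eventually (by norm_num)] with y hy using hy.differentiableAt (by norm_num)
    filter_upwards [hc.eventually hev] with t ht
    exact ht.hasFDerivAt.comp_hasDerivAt t (hline t)
  · have h0 : HasFDerivAt (fderiv ℝ u) (fderiv ℝ (fderiv ℝ u) x) (x + (0:ℝ) • w) := by
      simpa using hfd.hasFDerivAt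
    have h1 := h0.comp_hasDerivAt (0:ℝ) (hline 0)
    have h2 := h1.clm_apply (hasDerivAt_const (0:ℝ) w)
    refine HasDerivAt.congr_deriv h2 ?_
    have hw : ∑ i, w i • EuclideanSpace.single i (1:ℝ) = w := by
      simpa using (EuclideanSpace.basisFun (Fin n) ℝ).sum_repr w
    have hQ : ∀ Q : Euc n →L[ℝ] Euc n →L[ℝ] ℝ, Q w w = ∑ i, ∑ j, w i *
        (Q (EuclideanSpace.single i (1:ℝ)) (EuclideanSpace.single j (1:ℝ)) * w j) := by
      intro Q
      conv_lhs => rw [← hw]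
      simp only [map_sum, map_smul, ContinuousLinearMap.sum_apply, ContinuousLinearMap.smul_apply,
        smul_eq_mul, Finset.mul_sum]
      rw [Finset.sum_comm]
      apply Finset.sum_congr rfl
      intro i _
      apply Finset.sum_congr rfl
      intro j _
      ring
    simp only [map_zero, add_zero]
    rw [hQ]
    simp only [dotProduct, mulVec, Finset.mul_sum, hh]

lemma comparison {n k : ℕ} (hk : 1 ≤ k) (hkn : k ≤ n) {K D : Set (Euc n)} (hK : IsCompact K)
    (hD : IsOpen D) (hDK : D ⊆ K) {f g : Euc n → ℝ} (hf : ContinuousOn f K)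
    (hg : ContinuousOn g K) {c : ℝ} (hb : ∀ x ∈ K, x ∉ D → f x ≤ g x + c)
    (h : ∀ x ∈ D, ∃ A B : Matrix (Fin n) (Fin n) ℝ, Cone k A ∧ 1 ≤ (P A).coeff k ∧
      B.IsHermitian ∧ (P B).coeff k ≤ 1 ∧ (∀ w : Euc n, Sec f x w (w.ofLp ⬝ᵥ A *ᵥ w.ofLp)) ∧
      ∀ w : Euc n, Sec g x w (w.ofLp ⬝ᵥ B *ᵥ w.ofLp)) :
    ∀ x ∈ K, f x ≤ g x + c := by
  intro x hx
  by_contra hcon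
  push Not at hcon
  obtain ⟨R, hR⟩ := hK.isBounded.exists_norm_le
  have hR2 : ∀ y ∈ K, ‖y‖ ^ 2 ≤ R ^ 2 := fun y hy => by
    have := hR y hy
    have := norm_nonneg y
    nlinarith
  set η := f x - g x - c with hη
  have hηpos : 0 < η := by linarith
  set τ := η / (2 * (R ^ 2 + 1)) with hτ
  have hτpos : 0 < τ := by positivity
  have hτR : τ * R ^ 2 < η := by
    have : τ * (2 * (R ^ 2 + 1)) = η := by rw [hτ]; field_simp
    nlinarith [sq_nonneg R]
  have hcont : ContinuousOn (fun y => f y + (-1) * g y + τ * ‖y‖ ^ 2) K := by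
    fun_prop
  obtain ⟨y, hyK, hy⟩ := hK.exists_isMaxOn ⟨x, hx⟩ hcont
  have hyD : y ∈ D := by
    by_contra hn
    have h1 := hb y hyK hn
    have h2 := isMaxOn_iff.1 hy x hx
    have h3 := hR2 y hyK
    have : 0 ≤ τ * ‖x‖ ^ 2 := by positivity
    have : τ * ‖y‖ ^ 2 ≤ τ * R ^ 2 := by gcongr
    linarith
  have hloc : IsLocalMax (fun y => f y + (-1) * g y + τ * ‖y‖ ^ 2) y :=
    hy.isLocalMax (mem_of_superset (hD.mem_nhds hyD) hDK)
  obtain ⟨A, B, hA, hA1, hB, hB1, hfA, hgB⟩ := h y hyD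
  have := sigma_strict hk hkn hA hB (τ := 2 * τ) (by linarith) (fun w => by
    have := Sec.localMax (((hfA (WithLp.toLp 2 w)).add ((hgB (WithLp.toLp 2 w)).smul (-1))).add
      ((Sec.normsq y (WithLp.toLp 2 w)).smul τ)) hloc
    have e : ‖WithLp.toLp 2 w‖ ^ 2 = w ⬝ᵥ w := by
      rw [EuclideanSpace.norm_sq_eq]; simp [dotProduct, sq]
    rw [e] at this
    simp only at this
    linarith)
  linarith

lemma maxprin {n : ℕ} {K D : Set (Euc n)} (hK : IsCompact K)
    (hD : IsOpen D) (hDK : D ⊆ K) {f : Euc n → ℝ} (hf : ContinuousOn f K)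
    {c : ℝ} (hb : ∀ x ∈ K, x ∉ D → f x ≤ c)
    (h : ∀ x ∈ D, ∃ d : Fin n → ℝ, 0 < ∑ i, d i ∧
      ∀ i, Sec f x (EuclideanSpace.single i (1:ℝ)) (d i)) :
    (∀ x ∈ K, f x ≤ c) ∧ ∀ x ∈ D, f x < c := by
  have hno : ∀ y ∈ D, ¬ IsLocalMax f y := by
    intro y hy hm
    obtain ⟨d, h1, h2⟩ := h y hy
    have : ∑ i, d i ≤ 0 := Finset.sum_nonpos fun i _ => (h2 i).localMax hm
    linarith
  have h1 : ∀ x ∈ K, f x ≤ c := by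
    intro x hx
    obtain ⟨y, hyK, hy⟩ := hK.exists_isMaxOn ⟨x, hx⟩ hf
    by_cases hyD : y ∈ D
    · exact absurd (hy.isLocalMax (mem_of_superset (hD.mem_nhds hyD) hDK)) (hno y hyD)
    · exact le_trans (hy hx) (hb y hyK hyD)
  refine ⟨h1, fun x hx => lt_of_le_of_ne (h1 x (hDK hx)) fun he => hno x hx ?_⟩
  filter_upwards [hD.mem_nhds hx] with y hy
  rw [he]; exact h1 y (hDK hy)

/-- rotation taking a to b -/
lemma rotation {n : ℕ} (a b : Euc n) (ha : ‖a‖ = 1) (hb : ‖b‖ = 1) (hab : ‖a - b‖ ≤ 1) :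
    ∃ R : Euc n ≃ₗᵢ[ℝ] Euc n, R a = b ∧ ∀ z, ‖R z - z‖ ≤ 4 * ‖a - b‖ * ‖z‖ := by
  have hw : a + b ≠ 0 := by
    intro h
    have : a - b = (2 : ℝ) • a := by
      rw [eq_neg_of_add_eq_zero_right h]; module
    rw [this, norm_smul, ha] at hab
    norm_num at hab
  set w := a + b with hwd
  have hwn : 0 < ‖w‖ := norm_pos_iff.2 hw
  set e := (‖w‖⁻¹) • w with he
  have hen : ‖e‖ = 1 := by rw [he, norm_smul, norm_inv, norm_norm]; field_simp
  have hea : ‖e - a‖ ≤ ‖a - b‖ := by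
    have h1 : e - a = (‖w‖⁻¹ * (2 - ‖w‖) / 2) • w + (1/2 : ℝ) • (b - a) := by
      rw [he]
      have : a = (1/2 : ℝ) • w - (1/2 : ℝ) • (b - a) := by rw [hwd]; module
      have h3 : ‖w‖⁻¹ * (2 - ‖w‖) / 2 = ‖w‖⁻¹ - 1/2 := by field_simp
      rw [h3]
      nth_rewrite 2 [this]
      module
    have h2 : |2 - ‖w‖| ≤ ‖a - b‖ := by
      have := abs_norm_sub_norm_le ((2:ℝ) • a) w
      rw [norm_smul, ha] at this
      norm_num at this
      have e : (2:ℝ) • a - w = a - b := by rw [hwd]; module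
      rwa [e] at this
    rw [h1]
    refine (norm_add_le _ _).trans ?_
    rw [norm_smul, norm_smul, norm_sub_rev b a]
    have : ‖‖w‖⁻¹ * (2 - ‖w‖) / 2‖ * ‖w‖ = |2 - ‖w‖| / 2 := by
      rw [norm_div, norm_mul, norm_inv, norm_norm, Real.norm_eq_abs]
      norm_num
      field_simp
    rw [this]
    norm_num
    linarith
  refine ⟨((ℝ ∙ a)ᗮ.reflection).trans ((ℝ ∙ e)ᗮ.reflection), ?_, ?_⟩
  · rw [LinearIsometryEquiv.trans_apply, Submodule.reflection_orthogonalComplement_singleton_eq_neg]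
    rw [Submodule.reflection_orthogonal_apply, Submodule.reflection_singleton_apply, hen]
    have : ⟪e, -a⟫ = - ‖w‖ / 2 := by
      rw [he, inner_smul_left, inner_neg_right]
      have h1 : ⟪w, a⟫ = ‖w‖ ^ 2 / 2 := by
        rw [hwd, norm_add_sq_real, inner_add_left, real_inner_self_eq_norm_sq, ha, hb,
          real_inner_comm]
        ring
      rw [h1]; simp; field_simp
    rw [this, he, smul_smul]
    have h4 : (-‖w‖ / 2 * ‖w‖⁻¹) = -1/2 := by field_simp
    simp only [RCLike.ofReal_one, one_pow, div_one]
    rw [h4, hwd]; module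
  · intro z
    rw [LinearIsometryEquiv.trans_apply]
    set y := (ℝ ∙ a)ᗮ.reflection z with hy
    have hz : z = (ℝ ∙ a)ᗮ.reflection y := by rw [hy, Submodule.reflection_reflection]
    have hyz : ‖z‖ = ‖y‖ := by rw [hy]; simp
    rw [hyz]
    nth_rewrite 1 [hz]
    rw [Submodule.reflection_orthogonal_apply, Submodule.reflection_orthogonal_apply,
      Submodule.reflection_singleton_apply, Submodule.reflection_singleton_apply, hen, ha]
    simp only [RCLike.ofReal_one, one_pow, div_one]
    have h1 : -(2 • (⟪e, y⟫ • e) - y) - -(2 • (⟪a, y⟫ • a) - y) =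
        (2:ℝ) • (⟪a - e, y⟫ • a + ⟪e, y⟫ • (a - e)) := by
      rw [inner_sub_left]; module
    have h2 : ‖⟪a - e, y⟫ • a + ⟪e, y⟫ • (a - e)‖ ≤ 2 * ‖a - b‖ * ‖y‖ := by
      refine (norm_add_le _ _).trans ?_
      rw [norm_smul, norm_smul, ha]
      have i1 := norm_inner_le_norm (𝕜 := ℝ) (a - e) y
      have i2 := norm_inner_le_norm (𝕜 := ℝ) e y
      rw [hen] at i2
      rw [norm_sub_rev] at hea
      have := norm_nonneg y
      have := norm_nonneg (a - e)
      nlinarith [mul_le_mul_of_nonneg_right hea (norm_nonneg y), mul_le_mul_of_nonneg_right i2 (norm_nonneg (a-e))]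
    have h3 : ‖(2:ℝ) • (⟪a - e, y⟫ • a + ⟪e, y⟫ • (a - e))‖ ≤ 4 * ‖a - b‖ * ‖y‖ := by
      rw [norm_smul]; norm_num; linarith
    rw [← h1] at h3
    exact h3

end S7
namespace S7
open Matrix

/-- working form of being a solution -/
structure G {n : ℕ} (k : ℕ) (Ω : Set (Euc n)) (ε M : ℝ) (u : Euc n → ℝ) : Prop where
  cont : ContinuousOn u {x | x ∈ closure Ω ∧ ε ≤ ‖x‖}
  sec : ∀ x ∈ Ω, ε < ‖x‖ → ∃ A : Matrix (Fin n) (Fin n) ℝ, Cone k A ∧ (P A).coeff k = 1 ∧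
    ∀ w : Euc n, Sec u x w (w.ofLp ⬝ᵥ A *ᵥ w.ofLp)
  fr : ∀ x ∈ frontier Ω, u x = 0
  sp : ∀ x : Euc n, ‖x‖ = ε → u x = -M

lemma ring_mem {n : ℕ} {Ω : Set (Euc n)} (hΩ : IsOpen Ω) {ε : ℝ} (hε : 0 < ε)
    (hb : closedBall (0 : Euc n) ε ⊆ Ω) {x : Euc n} (hx : x ∈ closure Ω) (hx' : ε ≤ ‖x‖) :
    x ∈ ringSet Ω 0 ε := by
  rw [ringSet, Set.sdiff_eq]
  rcases hx'.lt_or_eq with h | h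
  · have ho : IsOpen (closedBall (0 : Euc n) ε)ᶜ := isClosed_closedBall.isOpen_compl
    exact ho.closure_inter ⟨hx, by simpa using h⟩
  · have hxΩ : x ∈ Ω := hb (by simp [← h])
    have : x ∈ closure (closedBall (0 : Euc n) ε)ᶜ := by
      rw [closure_compl, interior_closedBall _ hε.ne']
      simp [h]
    exact hΩ.inter_closure ⟨hxΩ, this⟩

lemma ring_nhds {n : ℕ} {Ω : Set (Euc n)} (hΩ : IsOpen Ω) {ε : ℝ} {x : Euc n}
    (hx : x ∈ Ω) (hx' : ε < ‖x‖) : ringSet Ω 0 ε ∈ 𝓝 x := by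
  have ho : IsOpen (Ω \ closedBall (0 : Euc n) ε) := hΩ.sdiff isClosed_closedBall
  exact mem_of_superset (ho.mem_nhds ⟨hx, by simpa using hx'⟩) subset_closure

lemma G_of {n k : ℕ} {Ω : Set (Euc n)} (hΩ : IsOpen Ω) {ε M : ℝ} (hε : 0 < ε)
    (hb : closedBall (0 : Euc n) ε ⊆ Ω) {u : Euc n → ℝ} (hu : IsSol k Ω 0 ε M u) :
    G k Ω ε M u := by
  obtain ⟨h1, h2, h3, h4⟩ := hu
  refine ⟨h1.continuousOn.mono fun x hx => ring_mem hΩ hε hb hx.1 hx.2, ?_, h3,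
    fun x hx => h4 x (by simpa using hx)⟩
  intro x hx hx'
  obtain ⟨a, b⟩ := h2 x ⟨hx, by simpa using hx'⟩
  exact ⟨_, cone_of a, by rw [sigma_of a, b], fun w => Sec.of_contDiff (ring_nhds hΩ hx hx') h1 w⟩

lemma diagSec {n k : ℕ} (hk : 1 ≤ k) {A : Matrix (Fin n) (Fin n) ℝ} (hA : Cone k A)
    {u : Euc n → ℝ} {x : Euc n} (h : ∀ w : Euc n, Sec u x w (w.ofLp ⬝ᵥ A *ᵥ w.ofLp)) :
    0 < ∑ i, A i i ∧ ∀ i, Sec u x (EuclideanSpace.single i (1:ℝ)) (A i i) := by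
  constructor
  · have := hA.2 1 le_rfl hk
    rw [P_trace] at this
    exact this
  · intro i
    have := h (EuclideanSpace.single i (1:ℝ))
    simpa using this

lemma K_compact {n : ℕ} {Ω : Set (Euc n)} (hΩb : IsBounded Ω) (ε : ℝ) :
    IsCompact {x : Euc n | x ∈ closure Ω ∧ ε ≤ ‖x‖} := by
  have h1 : IsCompact (closure Ω) := hΩb.isCompact_closure
  exact h1.inter_right (isClosed_le continuous_const continuous_norm)

lemma D_open {n : ℕ} {Ω : Set (Euc n)} (hΩ : IsOpen Ω) (ε : ℝ) :
    IsOpen {x : Euc n | x ∈ Ω ∧ ε < ‖x‖} :=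
  hΩ.inter (isOpen_lt continuous_const continuous_norm)

lemma bdry {n : ℕ} {Ω : Set (Euc n)} (hΩ : IsOpen Ω) {ε : ℝ} {x : Euc n}
    (hx : x ∈ {x : Euc n | x ∈ closure Ω ∧ ε ≤ ‖x‖}) (hx' : x ∉ {x : Euc n | x ∈ Ω ∧ ε < ‖x‖}) :
    x ∈ frontier Ω ∨ ‖x‖ = ε := by
  by_cases h : x ∈ Ω
  · right
    have : ¬ ε < ‖x‖ := fun h' => hx' ⟨h, h'⟩
    exact le_antisymm (not_lt.1 this) hx.2
  · left
    rw [hΩ.frontier_eq]; exact ⟨hx.1, h⟩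

lemma u_nonpos {n k : ℕ} (hk : 1 ≤ k) {Ω : Set (Euc n)} (hΩ : IsOpen Ω) (hΩb : IsBounded Ω)
    {ε M : ℝ} (hM : 0 < M) {u : Euc n → ℝ} (hu : G k Ω ε M u) {x : Euc n} (hx : x ∈ closure Ω)
    (hx' : ε ≤ ‖x‖) : u x ≤ 0 := by
  refine (maxprin (K_compact hΩb ε) (D_open hΩ ε) (fun x hx => ⟨subset_closure hx.1, hx.2.le⟩)
    hu.cont (c := 0) ?_ ?_).1 x ⟨hx, hx'⟩
  · intro y hy hy'
    rcases bdry hΩ hy hy' with h | h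
    · rw [hu.fr y h]
    · rw [hu.sp y h]; linarith
  · intro y hy
    obtain ⟨A, hA, _, hs⟩ := hu.sec y hy.1 hy.2
    exact ⟨_, diagSec hk hA hs⟩

lemma u_lower {n k : ℕ} (hk : 1 ≤ k) (hkn : k ≤ n) {Ω : Set (Euc n)} (hΩ : IsOpen Ω)
    (hΩb : IsBounded Ω) {ε M M₁ : ℝ} (hM : M₁ < M) (hε : 0 < ε)
    (hsub : ∀ x ∈ frontier Ω, underSol k (0 : Euc n) ε M₁ x ≤ 0)
    {u : Euc n → ℝ} (hu : G k Ω ε M u) {x : Euc n} (hx : x ∈ closure Ω)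
    (hx' : ε ≤ ‖x‖) : -M ≤ u x := by
  have hch : (0:ℝ) < n.choose k := by exact_mod_cast Nat.choose_pos hkn
  have hc : 0 < cnk n k := Real.rpow_pos_of_pos hch _
  have hck : cnk n k ^ k = n.choose k := by
    rw [cnk, ← Real.rpow_natCast, ← Real.rpow_mul hch.le]
    have : (k:ℝ) ≠ 0 := by positivity
    field_simp
    simp
  set c := cnk n k with hcd
  have key := comparison hk hkn (K_compact hΩb ε) (D_open hΩ ε)
    (fun x hx => ⟨subset_closure hx.1, hx.2.le⟩)
    (f := fun x => (1 / (2 * c)) * ‖x‖ ^ 2 + (-(ε ^ 2 / (2 * c)) - M)) (g := u) (by fun_prop) hu.cont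
    (c := 0) ?_ ?_ x ⟨hx, hx'⟩
  · simp only [add_zero] at key
    have : ε ^ 2 / (2 * c) ≤ 1 / (2 * c) * ‖x‖ ^ 2 := by
      rw [one_div_mul_eq_div]; gcongr
    linarith
  · intro y hy hy'
    rcases bdry hΩ hy hy' with h | h
    · have := hsub y h
      rw [underSol, sub_zero] at this
      rw [hu.fr y h, one_div_mul_eq_div]
      linarith
    · rw [hu.sp y h, h]; apply le_of_eq; ring
  · intro y hy
    obtain ⟨A, hA, hA1, hs⟩ := hu.sec y hy.1 hy.2
    refine ⟨c⁻¹ • 1, A, ⟨?_, ?_⟩, ?_, hA.1, hA1.le, ?_, hs⟩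
    · rw [Matrix.IsHermitian, conjTranspose_eq_transpose_of_trivial, transpose_smul, transpose_one]
    · intro j h1 h2
      rw [P_smul, P_one]
      have : (0:ℝ) < n.choose j := by exact_mod_cast Nat.choose_pos (h2.trans hkn)
      positivity
    · rw [P_smul, P_one, ← hck, inv_pow, inv_mul_cancel₀ (by positivity)]
    · intro w
      have := ((Sec.normsq y w).smul (1 / (2 * c))).add (Sec.const (-(ε ^ 2 / (2 * c)) - M) y w)
      convert this using 1
      rw [EuclideanSpace.norm_sq_eq, smul_mulVec, one_mulVec, dotProduct_smul]
      simp [dotProduct, sq]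
      field_simp

lemma lip_bdry {n k : ℕ} (hk : 1 ≤ k) (hkn : k ≤ n)
    (Ω₁ : Set (Euc n)) (hΩo : IsOpen Ω₁) (hΩconv : Convex ℝ Ω₁)
    (hΩb : IsBounded Ω₁) 
    (ε₀ : ℝ) (hε₀ : 0 < ε₀) (hball : closedBall (0 : Euc n) ε₀ ⊆ Ω₁)
    (r₁ : ℝ) (hr₁ : ε₀ < r₁) (hball' : closedBall (0 : Euc n) r₁ ⊆ Ω₁)
    (ψ : Euc n → ℝ) (hψ : IsSol22 k Ω₁ ψ) (M₁ M : ℝ) (hM₁ : 0 < M₁) (hM : M₁ < M)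
    (hM₁sub : ∀ ε ∈ Ioo (0:ℝ) ε₀, ∀ x ∈ frontier Ω₁, underSol k (0 : Euc n) ε M₁ x ≤ 0) :
    ∃ C : ℝ, 0 ≤ C ∧ ∀ ε ∈ Ioo (0:ℝ) ε₀, ∀ u : Euc n → ℝ, G k Ω₁ ε M u →
      ∀ x ∈ closure Ω₁, ε ≤ ‖x‖ → ∀ z ∈ frontier Ω₁, -(C * ‖x - z‖) ≤ u x := by
  obtain ⟨hψ1, hψ2, hψ3⟩ := hψ
  have hcomp : IsCompact (closure Ω₁) := hΩb.isCompact_closure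
  have hψs : ∀ x ∈ Ω₁, ∃ A : Matrix (Fin n) (Fin n) ℝ, Cone k A ∧ (P A).coeff k = 1 ∧
      ∀ w : Euc n, Sec ψ x w (w.ofLp ⬝ᵥ A *ᵥ w.ofLp) := by
    intro x hx
    obtain ⟨a, b⟩ := hψ2 x hx
    exact ⟨_, cone_of a, by rw [sigma_of a, b], fun w => Sec.of_contDiff
      (mem_of_superset (hΩo.mem_nhds hx) subset_closure) (hψ1.of_le (WithTop.coe_le_coe.2 le_top)) w⟩
  have hneg : ∀ x ∈ Ω₁, ψ x < 0 := by
    refine (maxprin hcomp hΩo subset_closure hψ1.continuousOn ?_ ?_).2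
    · intro x hx hx'
      rw [hψ3 x (by rw [hΩo.frontier_eq]; exact ⟨hx, hx'⟩)]
    · intro y hy
      obtain ⟨A, hA, _, hs⟩ := hψs y hy
      exact ⟨_, diagSec hk hA hs⟩
  -- Lipschitz
  obtain ⟨L, hL0, hL⟩ : ∃ L : ℝ, 0 ≤ L ∧ ∀ x ∈ closure Ω₁, ∀ z ∈ closure Ω₁,
      ‖ψ x - ψ z‖ ≤ L * ‖x - z‖ := by
    have hne : (interior (closure Ω₁)).Nonempty :=
      ⟨0, interior_maximal subset_closure hΩo (hball (by simp [hε₀.le]))⟩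
    have hud : UniqueDiffOn ℝ (closure Ω₁) := uniqueDiffOn_convex hΩconv.closure hne
    have hc : ContinuousOn (fderivWithin ℝ ψ (closure Ω₁)) (closure Ω₁) :=
      hψ1.continuousOn_fderivWithin hud (by simp)
    obtain ⟨L, hL⟩ := hcomp.exists_bound_of_continuousOn hc
    refine ⟨max L 0, le_max_right _ _, fun x hx z hz => ?_⟩
    exact hΩconv.closure.norm_image_sub_le_of_norm_fderivWithin_le
      (hψ1.differentiableOn (by simp)) (fun y hy => (hL y hy).trans (le_max_left _ _)) hz hx
  -- negative on the sphere
  obtain ⟨m, hm0, hm⟩ : ∃ m : ℝ, 0 < m ∧ ∀ x : Euc n, ‖x‖ = ε₀ → ψ x ≤ -m := by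
    have hS : IsCompact (sphere (0 : Euc n) ε₀) := isCompact_sphere _ _
    have hSΩ : sphere (0 : Euc n) ε₀ ⊆ Ω₁ := sphere_subset_closedBall.trans hball
    have hne : (sphere (0 : Euc n) ε₀).Nonempty := by
      refine ⟨EuclideanSpace.single ⟨0, by omega⟩ ε₀, ?_⟩
      simp [abs_of_pos hε₀]
    obtain ⟨y, hy, hmax⟩ := hS.exists_isMaxOn hne
      (hψ1.continuousOn.mono (hSΩ.trans subset_closure))
    refine ⟨-ψ y, by linarith [hneg y (hSΩ hy)], fun x hx => ?_⟩
    have := isMaxOn_iff.1 hmax x (by simpa using hx)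
    linarith
  have hMpos : 0 < M := hM₁.trans hM
  set K := 1 + M / m with hKd
  have hK1 : 1 ≤ K := by have : 0 ≤ M / m := by positivity
                         linarith
  have hKm : M ≤ K * m := by rw [hKd, add_mul, div_mul_cancel₀ _ hm0.ne']; linarith
  refine ⟨K * L + M / (r₁ - ε₀), by have : 0 < r₁ - ε₀ := by linarith
                                    positivity, ?_⟩
  intro ε hε u hu x hx hx' z hz
  have hd : 0 < r₁ - ε₀ := by linarith
  by_cases hxe : ε₀ ≤ ‖x‖
  · have key := comparison hk hkn (K_compact hΩb ε₀) (D_open hΩo ε₀)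
      (fun x hx => ⟨subset_closure hx.1, hx.2.le⟩)
      (f := fun x => K * ψ x) (g := u)
      ((hψ1.continuousOn.mono (fun x hx => hx.1)).const_mul K |> fun h => h)
      (hu.cont.mono fun x hx => ⟨hx.1, hε.2.le.trans hx.2⟩)
      (c := 0) ?_ ?_ x ⟨hx, hxe⟩
    · have h1 := hL x hx z (frontier_subset_closure hz)
      rw [hψ3 z hz, sub_zero] at h1
      have h2 : -(L * ‖x - z‖) ≤ ψ x := (abs_le.1 h1).1
      have h3 : K * -(L * ‖x - z‖) ≤ K * ψ x := by gcongr
      have h4 : 0 ≤ M / (r₁ - ε₀) * ‖x - z‖ := by positivity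
      simp only [add_zero] at key
      linarith
    · intro y hy hy'
      rcases bdry hΩo hy hy' with h | h
      · simp [hu.fr y h, hψ3 y h]
      · have h1 := u_lower hk hkn hΩo hΩb hM hε.1 (hM₁sub ε hε) hu hy.1 (hε.2.le.trans hy.2)
        have h2 : K * ψ y ≤ K * -m := by gcongr; exact hm y h
        linarith
    · intro y hy
      obtain ⟨A, hA, hA1, hs⟩ := hψs y hy.1
      obtain ⟨B, hB, hB1, hs'⟩ := hu.sec y hy.1 (hε.2.trans hy.2)
      refine ⟨K • A, B, ⟨?_, ?_⟩, ?_, hB.1, hB1.le, ?_, hs'⟩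
      · have := hA.1
        rw [Matrix.IsHermitian, conjTranspose_eq_transpose_of_trivial] at this ⊢
        rw [transpose_smul, this]
      · intro j h1 h2
        rw [P_smul]
        have := hA.2 j h1 h2
        positivity
      · rw [P_smul, hA1, mul_one]; exact one_le_pow₀ hK1
      · intro w
        have := (hs w).smul K
        rwa [smul_mulVec, dotProduct_smul, smul_eq_mul]
  · push Not at hxe
    have h1 := u_lower hk hkn hΩo hΩb hM hε.1 (hM₁sub ε hε) hu hx hx'
    have h2 : r₁ < ‖z‖ := by
      by_contra hcon
      have : z ∈ Ω₁ := hball' (by simpa using hcon)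
      rw [hΩo.frontier_eq] at hz
      exact hz.2 this
    have h3 : r₁ - ε₀ ≤ ‖x - z‖ := by
      have := norm_sub_norm_le z x
      rw [norm_sub_rev] at this
      linarith
    have h4 : M ≤ M / (r₁ - ε₀) * ‖x - z‖ := by
      rw [div_mul_eq_mul_div, le_div_iff₀ hd]; gcongr
    have h5 : 0 ≤ K * L * ‖x - z‖ := by positivity
    linarith

lemma barrier {n k : ℕ} (hk : 1 ≤ k) (hkn : k ≤ n)
    (Ω₁ : Set (Euc n)) (hΩo : IsOpen Ω₁) (hΩb : IsBounded Ω₁) 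
    (ε₀ : ℝ) (hε₀ : 0 < ε₀) 
    (r₁ : ℝ) (hr₁ : ε₀ < r₁) (hball' : closedBall (0 : Euc n) r₁ ⊆ Ω₁)
    (M : ℝ) (hM : 0 < M) :
    ∃ C : ℝ, 0 ≤ C ∧ ∀ ε ∈ Ioo (0:ℝ) ε₀, ∀ u : Euc n → ℝ, G k Ω₁ ε M u →
      ∀ x ∈ closure Ω₁, ε ≤ ‖x‖ → u x ≤ -M + C * (‖x‖ ^ 2 / ε ^ 2 - 1) := by
  have hn : (0:ℝ) < n := by exact_mod_cast (by omega : 0 < n)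
  set E1 := Real.exp (-(n / 2 : ℝ)) with hE1
  set E2 := Real.exp (-(n / 2 * (r₁ ^ 2 / ε₀ ^ 2) : ℝ)) with hE2
  have hE : 0 < E1 - E2 := by
    rw [sub_pos, hE1, hE2, Real.exp_lt_exp, neg_lt_neg_iff]
    have : 1 < r₁ ^ 2 / ε₀ ^ 2 := by rw [one_lt_div (by positivity)]; gcongr
    have := mul_lt_mul_of_pos_left this (show (0:ℝ) < n / 2 by positivity)
    linarith
  set A := M / (E1 - E2) with hAd
  have hA0 : 0 < A := by positivity
  have hAE : A * E2 = A * E1 - M := by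
    have : A * (E1 - E2) = M := div_mul_cancel₀ _ hE.ne'
    linarith
  refine ⟨A * (n / 2), by positivity, ?_⟩
  intro ε hε u hu x hx hx'
  have hεp := hε.1
  set b := n / (2 * ε ^ 2) with hb
  have hbp : 0 < b := by positivity
  have key := (maxprin (K_compact hΩb ε) (D_open hΩo ε) (fun x hx => ⟨subset_closure hx.1, hx.2.le⟩)
    (f := fun x => u x + A * Real.exp (-b * ‖x‖ ^ 2)) (hu.cont.add (by fun_prop))
    (c := -M + A * E1) ?_ ?_).1 x ⟨hx, hx'⟩
  · replace key : u x + A * Real.exp (-b * ‖x‖ ^ 2) ≤ -M + A * E1 := key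
    have e1 : Real.exp (-b * ‖x‖ ^ 2) = E1 * Real.exp (-(n / 2 * (‖x‖ ^ 2 / ε ^ 2 - 1))) := by
      rw [hE1, ← Real.exp_add, hb]; congr 1; field_simp; ring
    rw [e1] at key
    set s := (n / 2 : ℝ) * (‖x‖ ^ 2 / ε ^ 2 - 1) with hs
    have hs0 : 0 ≤ s := by
      have : 1 ≤ ‖x‖ ^ 2 / ε ^ 2 := by rw [one_le_div (by positivity)]; gcongr
      have : 0 ≤ ‖x‖ ^ 2 / ε ^ 2 - 1 := by linarith
      positivity
    have h1 : 1 - s ≤ Real.exp (-s) := Real.one_sub_le_exp_neg s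
    have hE1p : 0 < E1 := Real.exp_pos _
    have hE1l : E1 ≤ 1 := Real.exp_le_one_iff.2 (by linarith)
    have h2 : E1 * (1 - Real.exp (-s)) ≤ s := by
      have : E1 * (1 - Real.exp (-s)) ≤ E1 * s := by gcongr; linarith
      nlinarith
    have h3 : A * (E1 * (1 - Real.exp (-s))) ≤ A * s := by gcongr
    rw [mul_assoc A, ← hs]
    linarith
  · intro y hy hy'
    rcases bdry hΩo hy hy' with h | h
    · rw [hu.fr y h]
      have h2 : r₁ < ‖y‖ := by
        by_contra hcon
        have : y ∈ Ω₁ := hball' (by simpa using hcon)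
        rw [hΩo.frontier_eq] at h
        exact h.2 this
      have : Real.exp (-b * ‖y‖ ^ 2) ≤ E2 := by
        rw [hE2, Real.exp_le_exp, neg_mul, neg_le_neg_iff, hb]
        have : r₁ ^ 2 / ε₀ ^ 2 ≤ ‖y‖ ^ 2 / ε ^ 2 := by
          have := hε.2
          have hr0 : 0 ≤ r₁ := by linarith
          gcongr
        calc (n / 2 : ℝ) * (r₁ ^ 2 / ε₀ ^ 2) ≤ n / 2 * (‖y‖ ^ 2 / ε ^ 2) := by gcongr
          _ = _ := by field_simp
      have : A * Real.exp (-b * ‖y‖ ^ 2) ≤ A * E2 := by gcongr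
      linarith
    · rw [hu.sp y h, h, hE1, hb]
      apply le_of_eq
      congr 3
      field_simp
  · intro y hy
    obtain ⟨B, hB, _, hs⟩ := hu.sec y hy.1 hy.2
    obtain ⟨h1, h2⟩ := diagSec hk hB hs
    refine ⟨_, ?_, fun i => (h2 i).add ((Sec.expn b y _).smul A)⟩
    rw [Finset.sum_add_distrib, ← Finset.mul_sum, ← Finset.sum_mul, Finset.sum_sub_distrib,
      ← Finset.mul_sum]
    have e1 : ∑ i, ⟪y, EuclideanSpace.single i (1:ℝ)⟫ ^ 2 = ‖y‖ ^ 2 := by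
      rw [EuclideanSpace.norm_sq_eq]
      refine Finset.sum_congr rfl fun i _ => ?_
      rw [EuclideanSpace.inner_single_right]; simp
    rw [e1]
    have e2 : 0 ≤ 4 * b ^ 2 * ‖y‖ ^ 2 - ∑ i : Fin n, 2 * b * ‖EuclideanSpace.single i (1:ℝ)‖ ^ 2 := by
      simp
      have hy2 : ε ^ 2 ≤ ‖y‖ ^ 2 := by have := hy.2.le; gcongr
      have : 2 * b * ε ^ 2 = n := by rw [hb]; field_simp
      have h5 : 2 * b * (2 * b * ε ^ 2) ≤ 2 * b * (2 * b * ‖y‖ ^ 2) := by gcongr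
      rw [this] at h5
      nlinarith
    have e3 : 0 ≤ A * ((4 * b ^ 2 * ‖y‖ ^ 2 - ∑ i : Fin n, 2 * b * ‖EuclideanSpace.single i (1:ℝ)‖ ^ 2) *
      Real.exp (-b * ‖y‖ ^ 2)) := by positivity
    linarith

end S7
namespace S7
open Matrix

lemma sec_rot {n k : ℕ} (R : Euc n ≃ₗᵢ[ℝ] Euc n) (l : ℝ) (hl : 0 < l)
    {A : Matrix (Fin n) (Fin n) ℝ} (hA : Cone k A) :
    ∃ B : Matrix (Fin n) (Fin n) ℝ, Cone k B ∧ (P B).coeff k = (P A).coeff k ∧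
      ∀ w : Euc n, (l ^ 2)⁻¹ * ((l • R w).ofLp ⬝ᵥ A *ᵥ (l • R w).ofLp) =
        w.ofLp ⬝ᵥ B *ᵥ w.ofLp := by
  let Q : Matrix (Fin n) (Fin n) ℝ := Matrix.of fun i j => R (EuclideanSpace.single j (1:ℝ)) i
  have hQ : ∀ w : Euc n, Q *ᵥ w.ofLp = (R w).ofLp := by
    intro w
    ext i
    have h1 : w = ∑ j, w j • EuclideanSpace.single j (1:ℝ) := by
      ext i; simp [Finset.sum_apply, Pi.single_apply]
    conv_rhs => rw [h1]
    simp [map_sum, mulVec, dotProduct, Q, mul_comm]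
  have hQQ : Qᵀ * Q = 1 := by
    ext i j
    have : ⟪R (EuclideanSpace.single j (1:ℝ)), R (EuclideanSpace.single i (1:ℝ))⟫ =
      ⟪EuclideanSpace.single j (1:ℝ), EuclideanSpace.single i (1:ℝ)⟫ := R.inner_map_map _ _
    rw [EuclideanSpace.inner_single_right] at this
    simp only [PiLp.inner_apply] at this
    rw [Matrix.mul_apply, Matrix.one_apply]
    simp only [transpose_apply, Q, Matrix.of_apply]
    simp at this
    exact this
  have hP : P (Qᵀ * A * Q) = P A := P_conj _ _ _ hQQ
  refine ⟨Qᵀ * A * Q, ⟨?_, ?_⟩, by rw [hP], ?_⟩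
  · have := hA.1
    rw [Matrix.IsHermitian, conjTranspose_eq_transpose_of_trivial] at this ⊢
    simp [transpose_mul, this, Matrix.mul_assoc]
  · rw [hP]; exact hA.2
  · intro w
    rw [WithLp.ofLp_smul, ← hQ, mulVec_smul, smul_dotProduct, dotProduct_smul, ← mulVec_mulVec,
      ← mulVec_mulVec, mulVec_transpose, dotProduct_comm w.ofLp, ← dotProduct_mulVec,
      smul_eq_mul, smul_eq_mul, dotProduct_comm (A *ᵥ _)]
    field_simp

set_option maxHeartbeats 2000000 in
lemma two_point {n k : ℕ} (hk : 1 ≤ k) (hkn : k ≤ n)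
    (Ω₁ : Set (Euc n)) (hΩo : IsOpen Ω₁) (hΩconv : Convex ℝ Ω₁)
    (hΩb : IsBounded Ω₁) 
    (ε₀ : ℝ) (hε₀ : 0 < ε₀) (hball : closedBall (0 : Euc n) ε₀ ⊆ Ω₁)
    (r₁ : ℝ) (hr₁ : ε₀ < r₁) (hball' : closedBall (0 : Euc n) r₁ ⊆ Ω₁)
    (ψ : Euc n → ℝ) (hψ : IsSol22 k Ω₁ ψ) (M₁ M : ℝ) (hM₁ : 0 < M₁) (hM : M₁ < M)
    (hM₁sub : ∀ ε ∈ Ioo (0:ℝ) ε₀, ∀ x ∈ frontier Ω₁, underSol k (0 : Euc n) ε M₁ x ≤ 0) :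
    ∃ C : ℝ, 0 ≤ C ∧ ∀ ε ∈ Ioo (0:ℝ) ε₀, ∀ u : Euc n → ℝ, G k Ω₁ ε M u →
      ∀ x ∈ Ω₁, ∀ y ∈ Ω₁, ε₀ < ‖x‖ → ‖x‖ ≤ ‖y‖ → ‖y - x‖ ≤ ε₀ / 2 →
        |u y - u x| ≤ C * ‖y - x‖ := by
  obtain ⟨C1, hC1, hlip⟩ := lip_bdry hk hkn Ω₁ hΩo hΩconv hΩb ε₀ hε₀ hball r₁ hr₁ hball' ψ hψ
    M₁ M hM₁ hM hM₁sub
  have hM0 : 0 < M := hM₁.trans hM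
  obtain ⟨C2, hC2, hbar⟩ := barrier hk hkn Ω₁ hΩo hΩb ε₀ hε₀ r₁ hr₁ hball' M hM0
  obtain ⟨R₀, hR0, hR⟩ : ∃ R₀ : ℝ, 0 ≤ R₀ ∧ ∀ z ∈ closure Ω₁, ‖z‖ ≤ R₀ := by
    obtain ⟨R₀, hR⟩ := hΩb.closure.exists_norm_le
    exact ⟨max R₀ 0, le_max_right _ _, fun z hz => (hR z hz).trans (le_max_left _ _)⟩
  set C3 := 9 * C1 * R₀ + 2 * M + 3 * C2 with hC3
  refine ⟨(C3 + 2 * M) / ε₀, by positivity, ?_⟩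
  intro ε hε u hu x hx y hy hxe hxy hd
  have hup : ∀ z ∈ closure Ω₁, ε ≤ ‖z‖ → u z ≤ 0 := fun z hz hz' =>
    u_nonpos hk hΩo hΩb hM0 hu hz hz'
  have hlow : ∀ z ∈ closure Ω₁, ε ≤ ‖z‖ → -M ≤ u z := fun z hz hz' =>
    u_lower hk hkn hΩo hΩb hM hε.1 (hM₁sub ε hε) hu hz hz'
  have hx0 : 0 < ‖x‖ := hε₀.trans hxe
  have hy0 : 0 < ‖y‖ := hx0.trans_le hxy
  set κ := ‖y - x‖ / ε₀ with hκ
  have hκ0 : 0 ≤ κ := by positivity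
  have hκ1 : κ ≤ 1 / 2 := by rw [hκ, div_le_iff₀ hε₀]; linarith
  have hκe : κ * ε₀ = ‖y - x‖ := div_mul_cancel₀ _ hε₀.ne'
  have hnn : ‖y‖ - ‖x‖ ≤ ‖y - x‖ := norm_sub_norm_le y x
  set l := ‖y‖ / ‖x‖ with hl
  have hlx : l * ‖x‖ = ‖y‖ := div_mul_cancel₀ _ hx0.ne'
  have hl1 : 1 ≤ l := by rw [hl, one_le_div hx0]; exact hxy
  have hlκ : l - 1 ≤ κ := by
    have : (l - 1) * ‖x‖ ≤ κ * ‖x‖ := by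
      have : κ * ε₀ ≤ κ * ‖x‖ := by gcongr
      linarith
    exact le_of_mul_le_mul_right this hx0
  set a := ‖x‖⁻¹ • x with ha
  set b := ‖y‖⁻¹ • y with hb
  have ha1 : ‖a‖ = 1 := by rw [ha, norm_smul, norm_inv, norm_norm, inv_mul_cancel₀ hx0.ne']
  have hb1 : ‖b‖ = 1 := by rw [hb, norm_smul, norm_inv, norm_norm, inv_mul_cancel₀ hy0.ne']
  have hab : ‖a - b‖ ≤ 2 * κ := by
    have h1 : ‖x‖ • (a - b) = (x - y) + (‖y‖ - ‖x‖) • b := by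
      have e1 : ‖x‖ • a = x := by rw [ha, smul_smul, mul_inv_cancel₀ hx0.ne', one_smul]
      have e2 : ‖y‖ • b = y := by rw [hb, smul_smul, mul_inv_cancel₀ hy0.ne', one_smul]
      rw [smul_sub, sub_smul, e1, e2]; abel
    have h2 : ‖x‖ * ‖a - b‖ ≤ 2 * ‖y - x‖ := by
      calc ‖x‖ * ‖a - b‖ = ‖‖x‖ • (a - b)‖ := by rw [norm_smul, norm_norm]
        _ ≤ ‖x - y‖ + ‖(‖y‖ - ‖x‖) • b‖ := by rw [h1]; exact norm_add_le _ _
        _ = ‖y - x‖ + (‖y‖ - ‖x‖) := by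
          rw [norm_smul, hb1, mul_one, Real.norm_of_nonneg (by linarith), norm_sub_rev]
        _ ≤ _ := by linarith
    have h3 : ε₀ * ‖a - b‖ ≤ ε₀ * (2 * κ) := by
      have : ε₀ * ‖a - b‖ ≤ ‖x‖ * ‖a - b‖ := by gcongr
      linarith
    exact le_of_mul_le_mul_left h3 hε₀
  obtain ⟨R, hRa, hRz⟩ := rotation a b ha1 hb1 (by linarith)
  let T : Euc n →ₗ[ℝ] Euc n := l • (R.toLinearEquiv : Euc n →ₗ[ℝ] Euc n)
  have hT : ∀ z, T z = l • R z := fun z => rfl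
  have hTc : Continuous T := T.continuous_of_finiteDimensional
  have hTn : ∀ z, ‖T z‖ = l * ‖z‖ := fun z => by
    rw [hT, norm_smul, R.norm_map, Real.norm_of_nonneg (by linarith)]
  have hTz : ∀ z, ‖z‖ ≤ ‖T z‖ := fun z => by
    rw [hTn]; nlinarith [norm_nonneg z]
  have hTx : T x = y := by
    have e1 : x = ‖x‖ • a := by rw [ha, smul_smul, mul_inv_cancel₀ hx0.ne', one_smul]
    have e2 : ‖y‖ • b = y := by rw [hb, smul_smul, mul_inv_cancel₀ hy0.ne', one_smul]
    rw [hT, e1, map_smul, hRa, smul_smul, hlx, e2]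
  have hTd : ∀ z ∈ closure Ω₁, ‖T z - z‖ ≤ 9 * R₀ * κ := by
    intro z hz
    have h1 : T z - z = (l - 1) • R z + (R z - z) := by rw [hT, sub_smul, one_smul]; abel
    have h2 := hR z hz
    calc ‖T z - z‖ ≤ ‖(l - 1) • R z‖ + ‖R z - z‖ := by rw [h1]; exact norm_add_le _ _
      _ ≤ κ * ‖z‖ + 4 * (2 * κ) * ‖z‖ := by
        rw [norm_smul, R.norm_map, Real.norm_of_nonneg (by linarith)]
        have := hRz z
        have h3 : 4 * ‖a - b‖ * ‖z‖ ≤ 4 * (2 * κ) * ‖z‖ := by gcongr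
        have h4 : (l - 1) * ‖z‖ ≤ κ * ‖z‖ := by gcongr
        linarith
      _ = 9 * ‖z‖ * κ := by ring
      _ ≤ _ := by gcongr
  set q := (l ^ 2)⁻¹ with hq
  have hl2 : 1 ≤ l ^ 2 := one_le_pow₀ hl1
  have hq0 : 0 < q := by positivity
  have hq1 : q ≤ 1 := inv_le_one_of_one_le₀ hl2
  have hql : q * l ^ 2 = 1 := inv_mul_cancel₀ (by positivity)
  have hl3 : l ^ 2 - 1 ≤ 3 * κ := by nlinarith
  have hq2 : 1 - q ≤ 2 * κ := by
    have : l * (2 - l) ≤ 1 := by nlinarith [sq_nonneg (l - 1)]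
    have h5 : (1 - 2 * (l - 1)) * l ^ 2 ≤ 1 := by nlinarith [sq_nonneg (l - 1)]
    have : 1 - 2 * (l - 1) ≤ q := by
      rw [hq, ← one_div, le_div_iff₀ (by positivity)]; exact h5
    linarith
  let K : Set (Euc n) := {z | (z ∈ closure Ω₁ ∧ ε ≤ ‖z‖) ∧ T z ∈ closure Ω₁}
  let D : Set (Euc n) := {z | (z ∈ Ω₁ ∧ ε < ‖z‖) ∧ T z ∈ Ω₁}
  have hKc : IsCompact K := (K_compact hΩb ε).inter_right (isClosed_closure.preimage hTc)
  have hDo : IsOpen D := (D_open hΩo ε).inter (hΩo.preimage hTc)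
  have hDK : D ⊆ K := fun z hz => ⟨⟨subset_closure hz.1.1, hz.1.2.le⟩, subset_closure hz.2⟩
  have hcu : ContinuousOn u K := hu.cont.mono fun z hz => hz.1
  have hcv : ContinuousOn (fun z => q * u (T z)) K := by
    refine ContinuousOn.mul continuousOn_const (hu.cont.comp hTc.continuousOn ?_)
    intro z hz
    exact ⟨hz.2, hz.1.2.trans (hTz z)⟩
  have hbd : ∀ z ∈ K, z ∉ D → u z ≤ q * u (T z) + C3 * κ ∧ q * u (T z) ≤ u z + C3 * κ := by
    intro z hz hz'
    have hTe : ε ≤ ‖T z‖ := hz.1.2.trans (hTz z)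
    have p1 : 0 ≤ C1 * R₀ * κ := by positivity
    have p2 : 0 ≤ M * κ := by positivity
    have p3 : 0 ≤ C2 * κ := by positivity
    have p4 : C1 * ‖T z - z‖ ≤ C1 * (9 * R₀ * κ) := by gcongr; exact hTd z hz.1.1
    have a1 := hup z hz.1.1 hz.1.2
    have a2 := hup (T z) hz.2 hTe
    have a3 := hlow z hz.1.1 hz.1.2
    have a4 := hlow (T z) hz.2 hTe
    have b1 : q * u (T z) ≤ 0 := by nlinarith
    have b2 : u (T z) ≤ q * u (T z) := by nlinarith
    have hC3' : C3 * κ = 9 * (C1 * R₀ * κ) + 2 * (M * κ) + 3 * (C2 * κ) := by rw [hC3]; ring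
    by_cases h1 : z ∈ Ω₁
    · by_cases h2 : T z ∈ Ω₁
      · have h3 : ‖z‖ = ε := by
          refine le_antisymm (not_lt.1 fun h => hz' ⟨⟨h1, h⟩, h2⟩) hz.1.2
        have h4 := hbar ε hε u hu (T z) hz.2 hTe
        have h5 : ‖T z‖ ^ 2 / ε ^ 2 = l ^ 2 := by
          have := hε.1
          rw [hTn, h3]; field_simp
        rw [h5] at h4
        have h6 : C2 * (l ^ 2 - 1) ≤ C2 * (3 * κ) := by gcongr
        rw [hu.sp z h3]
        have h7 : q * u (T z) ≤ q * (-M + C2 * (3 * κ)) := by gcongr; linarith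
        have h8 : q * (C2 * (3 * κ)) ≤ C2 * (3 * κ) := by nlinarith
        have h9 : M * (1 - q) ≤ M * (2 * κ) := by gcongr
        constructor <;> linarith
      · have hf : T z ∈ frontier Ω₁ := by rw [hΩo.frontier_eq]; exact ⟨hz.2, h2⟩
        have := hlip ε hε u hu z hz.1.1 hz.1.2 _ hf
        rw [norm_sub_rev] at this
        rw [hu.fr _ hf, mul_zero]
        constructor <;> linarith
    · have hf : z ∈ frontier Ω₁ := by rw [hΩo.frontier_eq]; exact ⟨hz.1.1, h1⟩
      have := hlip ε hε u hu (T z) hz.2 hTe _ hf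
      rw [hu.fr _ hf]
      constructor <;> linarith
  have hsec : ∀ z ∈ D, (∃ A : Matrix (Fin n) (Fin n) ℝ, Cone k A ∧ (P A).coeff k = 1 ∧
      ∀ w : Euc n, Sec u z w (w.ofLp ⬝ᵥ A *ᵥ w.ofLp)) ∧
      ∃ B : Matrix (Fin n) (Fin n) ℝ, Cone k B ∧ (P B).coeff k = 1 ∧
      ∀ w : Euc n, Sec (fun z => q * u (T z)) z w (w.ofLp ⬝ᵥ B *ᵥ w.ofLp) := by
    intro z hz
    refine ⟨hu.sec z hz.1.1 hz.1.2, ?_⟩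
    obtain ⟨A, hA, hA1, hs⟩ := hu.sec (T z) hz.2 (hz.1.2.trans_le (hTz z))
    obtain ⟨B, hB, hB1, hw⟩ := sec_rot R l (by linarith) hA
    refine ⟨B, hB, hB1.trans hA1, fun w => ?_⟩
    rw [← hw w]
    exact (Sec.comp T (hs (T w))).smul q
  have hxK : x ∈ K := ⟨⟨subset_closure hx, (hε.2.trans hxe).le⟩, by rw [hTx]; exact subset_closure hy⟩
  have k1 := comparison hk hkn hKc hDo hDK hcu hcv (fun z h h' => (hbd z h h').1) (fun z hz => by
    obtain ⟨⟨A, a1, a2, a3⟩, B, b1, b2, b3⟩ := hsec z hz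
    exact ⟨A, B, a1, a2.ge, b1.1, b2.le, a3, b3⟩) x hxK
  have k2 := comparison hk hkn hKc hDo hDK hcv hcu (fun z h h' => (hbd z h h').2) (fun z hz => by
    obtain ⟨⟨A, a1, a2, a3⟩, B, b1, b2, b3⟩ := hsec z hz
    exact ⟨B, A, b1, b2.ge, a1.1, a2.le, b3, a3⟩) x hxK
  simp only [hTx] at k1 k2
  have hye : ε ≤ ‖y‖ := (hε.2.trans hxe).le.trans hxy
  have c1 := hup y (subset_closure hy) hye
  have c2 := hlow y (subset_closure hy) hye
  have c3 : u y ≤ q * u y := by nlinarith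
  have c4 : q * u y ≤ u y + 2 * M * κ := by nlinarith
  have c5 : (C3 + 2 * M) / ε₀ * ‖y - x‖ = C3 * κ + 2 * M * κ := by rw [hκ]; ring
  have c6 : 0 ≤ M * κ := by positivity
  rw [c5, abs_le]
  constructor <;> linarith

end S7

/-- `C¹` estimates near the outer boundary, uniform in `ε`. -/
theorem statement7 {n k : ℕ} (hk : 1 ≤ k) (hkn : k ≤ n)
    (Ω₁ : Set (Euc n)) (hΩo : IsOpen Ω₁) (hΩconv : Convex ℝ Ω₁)
    (hΩb : IsBounded Ω₁) (hΩs : HasSmoothBoundary Ω₁)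
    (ε₀ : ℝ) (hε₀ : 0 < ε₀) (hball : closedBall (0 : Euc n) ε₀ ⊆ Ω₁)
    (ψ : Euc n → ℝ) (hψ : IsSol22 k Ω₁ ψ)
    (M₁ : ℝ) (hM₁ : 0 < M₁) (hM₁ψ : ∀ x ∈ closure Ω₁, -ψ x < M₁)
    (hM₁sub : ∀ ε ∈ Ioo (0:ℝ) ε₀, ∀ x ∈ frontier Ω₁, underSol k (0 : Euc n) ε M₁ x ≤ 0)
    (M : ℝ) (hM : M₁ < M)
 :
    ∀ δ : ℝ, 0 < δ →
      (∀ x ∈ Ω₁, infDist x (frontier Ω₁) < δ → x ∉ closedBall (0 : Euc n) ε₀) →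
      ∃ C : ℝ, 0 < C ∧ ∀ ε ∈ Ioo (0:ℝ) ε₀, ∀ u : Euc n → ℝ,
        IsSol k Ω₁ (0 : Euc n) ε M u →
        ∀ x ∈ Ω₁ \ closedBall (0 : Euc n) ε, infDist x (frontier Ω₁) < δ →
          ‖fderivWithin ℝ u (ringSet Ω₁ (0 : Euc n) ε) x‖ ≤ C := by
  intro δ hδ hδx
  obtain ⟨r, hr, hsub⟩ := (isCompact_closedBall (0 : Euc n) ε₀).exists_cthickening_subset_open
    hΩo hball
  rw [cthickening_closedBall hr.le hε₀.le] at hsub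
  obtain ⟨C, hC, htp⟩ := S7.two_point hk hkn Ω₁ hΩo hΩconv hΩb ε₀ hε₀ hball (r + ε₀)
    (by linarith) hsub ψ hψ M₁ M hM₁ hM hM₁sub
  refine ⟨C + 1, by linarith, ?_⟩
  intro ε hε u hu x hx hxd
  have hxe : ε₀ < ‖x‖ := by simpa using hδx x hx.1 hxd
  have hG := S7.G_of hΩo hε.1 ((closedBall_subset_closedBall hε.2.le).trans hball) hu
  have hnh := S7.ring_nhds hΩo hx.1 (hε.2.trans hxe)
  rw [fderivWithin_of_mem_nhds hnh]
  refine (norm_fderiv_le_of_lip' ℝ hC ?_).trans (by linarith)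
  have e1 : ∀ᶠ y in 𝓝 x, y ∈ Ω₁ := hΩo.mem_nhds hx.1
  have e2 : ∀ᶠ y in 𝓝 x, ε₀ < ‖y‖ :=
    (isOpen_lt continuous_const continuous_norm).mem_nhds hxe
  have e3 : ∀ᶠ y in 𝓝 x, y ∈ closedBall x (ε₀ / 2) := closedBall_mem_nhds x (by positivity)
  filter_upwards [e1, e2, e3] with y h1 h2 h3
  rw [mem_closedBall, dist_eq_norm] at h3
  rw [Real.norm_eq_abs]
  rcases le_total ‖x‖ ‖y‖ with h | h
  · exact htp ε hε u hG x hx.1 y h1 hxe h h3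
  · have := htp ε hε u hG y h1 x hx.1 h2 h (by rwa [norm_sub_rev])
    rwa [abs_sub_comm, norm_sub_rev] at this
end
end

section
/- Let M > M₁(Ω₁) and let u^ε be the strictly k-convex solution of problem (2.1). Then there is a constant C > 0, depending on n, k, Ω₁ and M but independent of ε, such that for all indices 1 ≤ i < j ≤ n the angular derivative satisfies |x_i ∂_j u^ε(x) − x_j ∂_i u^ε(x)| ≤ C for every x ∈ Ω̄^ε. -/
open Set Metric Filter Topology Bornology
open scoped RealInnerProductSpace

noncomputable section

open Polynomial in
lemma aux_splits_derivative (p : ℝ[X]) (hp : p.Splits) : (derivative p).Splits := by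
  rw [splits_iff_card_roots] at hp ⊢
  have h1 := card_roots_le_derivative p
  have h2 := (derivative p).card_roots'
  have h3 := natDegree_derivative_le p
  by_cases h0 : p.natDegree = 0
  · have : derivative p = 0 := derivative_of_natDegree_zero h0
    simp [this]
  · omega

open Polynomial in
lemma aux_laguerre (p : ℝ[X]) (hp : p.Splits) (x : ℝ) :
    p.eval x * (derivative (derivative p)).eval x ≤ ((derivative p).eval x) ^ 2 := by
  have key : ∀ s : Multiset ℝ, ∀ q : ℝ[X], q = (s.map (fun a => X - C a)).prod →
      q.eval x * (derivative (derivative q)).eval x ≤ ((derivative q).eval x) ^ 2 := by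
    intro s
    induction s using Multiset.induction with
    | empty => intro q hq; simp [hq]
    | cons a s ih =>
      intro q hq
      have ih' := ih _ rfl
      set g := (s.map (fun a => X - C a)).prod with hg
      have hq' : q = (X - C a) * g := by rw [hq, Multiset.map_cons, Multiset.prod_cons]
      have e1 : derivative q = g + (X - C a) * derivative g := by
        rw [hq']; simp [derivative_mul]
      have e2 : derivative (derivative q) = derivative g + (derivative g + (X - C a) * derivative (derivative g)) := by
        rw [e1]; simp [derivative_mul]
      rw [e2, e1, hq']
      simp only [eval_add, eval_mul, eval_sub, eval_X, eval_C]
      nlinarith [mul_le_mul_of_nonneg_left ih' (sq_nonneg (x - a)), sq_nonneg (eval x g)]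
  have h := hp.eq_prod_roots
  have h2 := key p.roots _ rfl
  rw [h]
  simp only [derivative_C_mul, eval_mul, eval_C]
  nlinarith [mul_le_mul_of_nonneg_left h2 (sq_nonneg p.leadingCoeff)]

def es {n : ℕ} (s : Finset (Fin n)) (k : ℕ) (lam : Fin n → ℝ) : ℝ :=
  ∑ S ∈ Finset.powersetCard k s, ∏ i ∈ S, lam i

lemma es_zero {n : ℕ} (s : Finset (Fin n)) (lam : Fin n → ℝ) : es s 0 lam = 1 := by
  simp [es]

lemma es_insert {n : ℕ} (s : Finset (Fin n)) (i : Fin n) (hi : i ∉ s) (k : ℕ) (lam : Fin n → ℝ) :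
    es (insert i s) (k+1) lam = es s (k+1) lam + lam i * es s k lam := by
  unfold es
  rw [Finset.powersetCard_succ_insert hi, Finset.sum_union, Finset.sum_image, Finset.mul_sum]
  · congr 1
    apply Finset.sum_congr rfl
    intro S hS
    rw [Finset.prod_insert]
    intro h
    exact hi ((Finset.mem_powersetCard.1 hS).1 h)
  · intro S hS T hT h
    have hS' : i ∉ S := fun h => hi ((Finset.mem_powersetCard.1 hS).1 h)
    have hT' : i ∉ T := fun h => hi ((Finset.mem_powersetCard.1 hT).1 h)
    have := congrArg (fun U => Finset.erase U i) h
    simpa [Finset.erase_insert hS', Finset.erase_insert hT'] using this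
  · rw [Finset.disjoint_left]
    intro S hS hS2
    obtain ⟨T, hT, rfl⟩ := Finset.mem_image.1 hS2
    exact hi ((Finset.mem_powersetCard.1 hS).1 (Finset.mem_insert_self _ _))

open Polynomial in
lemma es_newton {n : ℕ} (s : Finset (Fin n)) (j : ℕ) (lam : Fin n → ℝ) :
    es s j lam * es s (j+2) lam ≤ (es s (j+1) lam) ^ 2 := by
  by_cases hc : j + 2 ≤ s.card
  · obtain ⟨m, hm⟩ := Nat.exists_eq_add_of_le hc
    set P : ℝ[X] := ∏ i ∈ s, (X + C (lam i)) with hP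
    have hPs : P.Splits := by
      rw [hP]; apply Splits.prod; intro i _; exact Splits.X_add_C _
    have hD : ∀ m, (derivative^[m] P).Splits := by
      intro m
      induction m with
      | zero => simpa using hPs
      | succ m ih => rw [Function.iterate_succ_apply']; exact aux_splits_derivative _ ih
    have hev : ∀ m, (derivative^[m] P).eval 0 = (m.factorial : ℝ) * P.coeff m := by
      intro m
      rw [← coeff_zero_eq_eval_zero, coeff_iterate_derivative]
      simp [Nat.descFactorial_self]
    have h := aux_laguerre _ (hD m) 0
    rw [← Function.iterate_succ_apply' (⇑(derivative : ℝ[X] →ₗ[ℝ] ℝ[X])),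
      ← Function.iterate_succ_apply' (⇑(derivative : ℝ[X] →ₗ[ℝ] ℝ[X])), hev, hev, hev] at h
    have c0 : P.coeff m = es s (j+2) lam := by
      rw [hP, Finset.prod_X_add_C_coeff _ _ (by omega)]; unfold es; congr 2; omega
    have c1 : P.coeff (m+1) = es s (j+1) lam := by
      rw [hP, Finset.prod_X_add_C_coeff _ _ (by omega)]; unfold es; congr 2; omega
    have c2 : P.coeff (m+2) = es s j lam := by
      rw [hP, Finset.prod_X_add_C_coeff _ _ (by omega)]; unfold es; congr 2; omega
    rw [c0, c1, c2] at h
    have f : (0:ℝ) < m.factorial := by exact_mod_cast m.factorial_pos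
    simp only [Nat.factorial_succ, Nat.succ_eq_add_one] at h
    push_cast at h
    have hmm : (0:ℝ) ≤ m := Nat.cast_nonneg m
    set a := es s j lam
    set b := es s (j+1) lam
    set c := es s (j+2) lam
    have h' : ((m.factorial:ℝ)^2 * (m+1)) * (((m:ℝ)+2) * (a * c)) ≤ ((m.factorial:ℝ)^2 * (m+1)) * (((m:ℝ)+1) * b^2) := by
      nlinarith [h]
    have h2 := le_of_mul_le_mul_left h' (by positivity)
    by_contra hcon
    push Not at hcon
    have : 0 < a * c := lt_of_le_of_lt (sq_nonneg b) hcon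
    nlinarith
  · have : es s (j+2) lam = 0 := by
      unfold es
      rw [Finset.powersetCard_eq_empty.2 (by omega)]; simp
    rw [this]; simp; positivity

lemma es_pos_erase {n : ℕ} (s : Finset (Fin n)) (i : Fin n) (hi : i ∉ s) (k : ℕ) (lam : Fin n → ℝ)
    (h : ∀ j ≤ k + 1, 0 < es (insert i s) j lam) : ∀ j ≤ k, 0 < es s j lam := by
  intro j
  induction j with
  | zero => intro _; rw [es_zero]; norm_num
  | succ j ih =>
    intro hj
    have ha := ih (by omega)
    have h1 := h (j+1) (by omega)
    have h2 := h (j+2) (by omega)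
    rw [es_insert _ _ hi] at h1 h2
    have hN := es_newton s j lam
    by_contra hb
    push Not at hb
    set a := es s j lam
    set b := es s (j+1) lam
    set c := es s (j+2) lam
    have h3 : 0 ≤ (b + lam i * a) * (-b) := mul_nonneg h1.le (by linarith)
    have h4 : 0 < a * (c + lam i * b) := mul_pos ha h2
    nlinarith

lemma es_congr {n : ℕ} (s : Finset (Fin n)) (k : ℕ) (l m : Fin n → ℝ) (h : ∀ i ∈ s, l i = m i) :
    es s k l = es s k m := by
  unfold es
  apply Finset.sum_congr rfl
  intro S hS
  apply Finset.prod_congr rfl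
  intro i hi
  exact h i ((Finset.mem_powersetCard.1 hS).1 hi)

lemma es_update {n : ℕ} (k : ℕ) (lam : Fin n → ℝ) (i : Fin n) (t : ℝ) :
    es Finset.univ (k+1) (Function.update lam i t) = es Finset.univ (k+1) lam
      + (t - lam i) * es (Finset.univ.erase i) k lam := by
  have hi : i ∉ Finset.univ.erase i := by simp
  have e : (Finset.univ : Finset (Fin n)) = insert i (Finset.univ.erase i) := by simp
  have hcg : ∀ k, es (Finset.univ.erase i) k (Function.update lam i t) = es (Finset.univ.erase i) k lam := by
    intro k; apply es_congr; intro l hl; simp at hl; simp [hl]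
  conv_lhs => rw [e]
  conv_rhs => enter [1]; rw [e]
  rw [es_insert _ _ hi, es_insert _ _ hi, hcg, hcg]
  simp; ring

lemma es_pos_erase' {n : ℕ} (k : ℕ) (lam : Fin n → ℝ) (i : Fin n)
    (h : ∀ j ≤ k, 0 < es Finset.univ j lam) : ∀ j, j + 1 ≤ k → 0 < es (Finset.univ.erase i) j lam := by
  intro j hj
  obtain ⟨k', rfl⟩ : ∃ k', k = k' + 1 := ⟨k - 1, by omega⟩
  have e : (Finset.univ : Finset (Fin n)) = insert i (Finset.univ.erase i) := by simp
  exact es_pos_erase (Finset.univ.erase i) i (by simp) k' lam (by rw [← e]; exact h) j (by omega)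

lemma es_update_le {n : ℕ} (k : ℕ) (lam : Fin n → ℝ) (i : Fin n) (t : ℝ) (ht : lam i ≤ t)
    (h : ∀ j ≤ k, 0 < es Finset.univ j lam) :
    ∀ j ≤ k, es Finset.univ j lam ≤ es Finset.univ j (Function.update lam i t) := by
  intro j hj
  cases j with
  | zero => simp [es_zero]
  | succ j =>
    rw [es_update]
    have := es_pos_erase' k lam i h j hj
    nlinarith

lemma es_mono {n : ℕ} (k : ℕ) (l m : Fin n → ℝ) (hlm : ∀ i, l i ≤ m i)
    (h : ∀ j ≤ k, 0 < es Finset.univ j l) :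
    ∀ j ≤ k, es Finset.univ j l ≤ es Finset.univ j m := by
  have key : ∀ T : Finset (Fin n), ∀ j ≤ k, es Finset.univ j l ≤ es Finset.univ j (T.piecewise m l) := by
    intro T
    induction T using Finset.induction_on with
    | empty => intro j _; simp
    | insert i T hi ih =>
      intro j hj
      rw [Finset.piecewise_insert]
      refine (ih j hj).trans (es_update_le k _ i _ ?_ (fun j hj => (h j hj).trans_le (ih j hj)) j hj)
      rw [Finset.piecewise_eq_of_notMem _ _ _ hi]; exact hlm i
  intro j hj
  have := key Finset.univ j hj
  simpa using this

lemma es_strict {n : ℕ} (k : ℕ) (hk : 1 ≤ k) (l m : Fin n → ℝ) (hlm : ∀ i, l i ≤ m i)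
    (i : Fin n) (hi : l i < m i)
    (h : ∀ j ≤ k, 0 < es Finset.univ j l) :
    es Finset.univ k l < es Finset.univ k m := by
  obtain ⟨k', rfl⟩ : ∃ k', k = k' + 1 := ⟨k - 1, by omega⟩
  have h1 : es Finset.univ (k'+1) l < es Finset.univ (k'+1) (Function.update l i (m i)) := by
    rw [es_update]
    have := es_pos_erase' _ l i h k' le_rfl
    nlinarith
  refine h1.trans_le (es_mono (k'+1) _ m ?_ ?_ _ le_rfl)
  · intro a
    by_cases ha : a = i
    · subst ha; simp
    · simp [ha, hlm a]
  · intro j hj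
    exact (h j hj).trans_le (es_update_le _ l i _ hi.le h j hj)

lemma es_smul {n : ℕ} (k : ℕ) (K : ℝ) (l : Fin n → ℝ) :
    es Finset.univ k (fun i => K * l i) = K ^ k * es Finset.univ k l := by
  unfold es
  rw [Finset.mul_sum]
  apply Finset.sum_congr rfl
  intro S hS
  rw [Finset.prod_mul_distrib, Finset.prod_const, (Finset.mem_powersetCard.1 hS).2]

lemma esymm_compare {n k : ℕ} (hk : 1 ≤ k) (hn : 0 < n) (K : ℝ) (hK : 1 ≤ K) (d : ℝ) (hd : 0 < d)
    (l m : Fin n → ℝ) (hlm : ∀ i, K * l i + d ≤ m i)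
    (h : ∀ j, 1 ≤ j → j ≤ k → 0 < esymmVec j l) (h1 : esymmVec k l = 1) : 1 < esymmVec k m := by
  have hK0 : 0 < K := by linarith
  have hpos : ∀ j ≤ k, 0 < es Finset.univ j (fun i => K * l i) := by
    intro j hj
    rw [es_smul]
    apply mul_pos (by positivity)
    rcases Nat.eq_zero_or_pos j with rfl | hj0
    · rw [es_zero]; norm_num
    · exact h j hj0 hj
  have := es_strict k hk (fun i => K * l i) m (fun i => by have := hlm i; linarith) ⟨0, hn⟩
    (by have := hlm ⟨0, hn⟩; linarith) hpos
  rw [es_smul] at this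
  have e : es Finset.univ k l = 1 := h1
  rw [e] at this
  have h2 : 1 ≤ K ^ k := one_le_pow₀ hK
  calc (1:ℝ) ≤ K ^ k * 1 := by linarith
    _ < _ := this

lemma weyl_gen {E : Type*} [NormedAddCommGroup E] [InnerProductSpace ℝ E] [FiniteDimensional ℝ E]
    {N : ℕ} (hN : Module.finrank ℝ E = N) (A B : E →ₗ[ℝ] E) (hA : A.IsSymmetric) (hB : B.IsSymmetric)
    (R : E ≃ₗᵢ[ℝ] E) (K d : ℝ) (hK : 0 ≤ K)
    (h : ∀ w, K * ⟪w, A w⟫ + d * ‖w‖^2 ≤ ⟪R w, B (R w)⟫) (i : Fin N) :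
    K * hA.eigenvalues hN i + d ≤ hB.eigenvalues hN i := by
  set a := hA.eigenvectorBasis hN
  set b := hB.eigenvectorBasis hN
  let L : E →ₗ[ℝ] ({j : Fin N // j ≠ i} → ℝ) :=
    LinearMap.pi (fun j => if i < j.1 then (innerSL ℝ (a j.1) : E →ₗ[ℝ] ℝ)
      else (innerSL ℝ (b j.1) : E →ₗ[ℝ] ℝ) ∘ₗ (R.toLinearEquiv : E →ₗ[ℝ] E))
  have hker : L.ker ≠ ⊥ := by
    apply LinearMap.ker_ne_bot_of_finrank_lt
    rw [hN, Module.finrank_fintype_fun_eq_card, Fintype.card_subtype_compl]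
    simp
    exact i.pos
  obtain ⟨w, hw, hw0⟩ := Submodule.exists_mem_ne_zero_of_ne_bot hker
  have hL : ∀ j : {j : Fin N // j ≠ i}, L w j = 0 := by
    intro j; rw [LinearMap.mem_ker.1 hw]; rfl
  have h1 : ∀ j, i < j → ⟪a j, w⟫ = 0 := by
    intro j hj
    have := hL ⟨j, hj.ne'⟩
    simpa [L, hj] using this
  have h2 : ∀ j, j < i → ⟪b j, R w⟫ = 0 := by
    intro j hj
    have := hL ⟨j, hj.ne⟩
    simpa [L, hj.not_gt] using this
  have q : ∀ (T : E →ₗ[ℝ] E) (hT : T.IsSymmetric) (v : E), ⟪v, T v⟫ =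
      ∑ j, hT.eigenvalues hN j * ⟪hT.eigenvectorBasis hN j, v⟫^2 := by
    intro T hT v
    rw [← (hT.eigenvectorBasis hN).sum_inner_mul_inner]
    apply Finset.sum_congr rfl
    intro j _
    rw [← hT, hT.apply_eigenvectorBasis, real_inner_comm]
    simp [real_inner_smul_left]
    ring
  have nrm : ∀ (c : OrthonormalBasis (Fin N) ℝ E) (v : E), ‖v‖^2 = ∑ j, ⟪c j, v⟫^2 := by
    intro c v
    rw [← real_inner_self_eq_norm_sq, ← c.sum_inner_mul_inner]
    apply Finset.sum_congr rfl
    intro j _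
    rw [real_inner_comm]; ring
  have l1 : hA.eigenvalues hN i * ‖w‖^2 ≤ ⟪w, A w⟫ := by
    rw [q A hA, nrm a, Finset.mul_sum]
    apply Finset.sum_le_sum
    intro j _
    rcases lt_or_ge i j with hj | hj
    · have := h1 j hj
      simp only [a] at this
      simp [a, this]
    · exact mul_le_mul_of_nonneg_right (hA.eigenvalues_antitone hN hj) (sq_nonneg _)
  have l2 : ⟪R w, B (R w)⟫ ≤ hB.eigenvalues hN i * ‖w‖^2 := by
    rw [q B hB, ← R.norm_map w, nrm b, Finset.mul_sum]
    apply Finset.sum_le_sum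
    intro j _
    rcases lt_or_ge j i with hj | hj
    · have := h2 j hj
      simp only [b] at this
      simp [b, this]
    · exact mul_le_mul_of_nonneg_right (hB.eigenvalues_antitone hN hj) (sq_nonneg _)
  have hw2 : 0 < ‖w‖^2 := by positivity
  have := h w
  have l3 := mul_le_mul_of_nonneg_left l1 hK
  by_contra hcon
  push Not at hcon
  nlinarith

lemma weyl_mat {n : ℕ} (A B : Matrix (Fin n) (Fin n) ℝ) (hA : A.IsHermitian) (hB : B.IsHermitian)
    (R : Euc n ≃ₗᵢ[ℝ] Euc n) (K d : ℝ) (hK : 0 ≤ K)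
    (h : ∀ w, K * ⟪w, Matrix.toEuclideanLin A w⟫ + d * ‖w‖^2 ≤ ⟪R w, Matrix.toEuclideanLin B (R w)⟫)
    (i : Fin n) : K * hA.eigenvalues i + d ≤ hB.eigenvalues i := by
  unfold Matrix.IsHermitian.eigenvalues Matrix.IsHermitian.eigenvalues₀
  exact weyl_gen _ _ _ _ _ R K d hK h _

lemma second_deriv_line {n : ℕ} (u : Euc n → ℝ) (x w : Euc n) (hu : ContDiffAt ℝ 2 u x) :
    (∀ᶠ t in 𝓝 (0:ℝ), HasDerivAt (fun t : ℝ => u (x + t • w)) (fderiv ℝ u (x + t • w) w) t) ∧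
    HasDerivAt (fun t : ℝ => fderiv ℝ u (x + t • w) w) (fderiv ℝ (fderiv ℝ u) x w w) 0 := by
  have hline : ∀ t : ℝ, HasDerivAt (fun t : ℝ => x + t • w) w t := by
    intro t
    have := ((hasDerivAt_id t).smul_const w).const_add x
    simpa using this
  constructor
  · have h1 : ∀ᶠ y in 𝓝 x, ContDiffAt ℝ 2 u y := hu.eventually (by simp)
    have hc : Tendsto (fun t : ℝ => x + t • w) (𝓝 0) (𝓝 x) := by
      have : ContinuousAt (fun t : ℝ => x + t • w) 0 := (hline 0).continuousAt
      simpa [ContinuousAt] using this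
    filter_upwards [hc.eventually h1] with t ht
    exact (ht.differentiableAt (by norm_num)).hasFDerivAt.comp_hasDerivAt t (hline t)
  · have h2 : DifferentiableAt ℝ (fderiv ℝ u) x :=
      (hu.fderiv_right (m := 1) (by norm_num)).differentiableAt (by norm_num)
    have h3 : HasFDerivAt (fderiv ℝ u) (fderiv ℝ (fderiv ℝ u) x) (x + (0:ℝ) • w) := by
      simpa using h2.hasFDerivAt
    have h4 := h3.comp_hasDerivAt (0:ℝ) (hline 0)
    exact h4.clm_apply (hasDerivAt_const (0:ℝ) w) |>.congr_deriv (by simp)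

lemma local_max_second {g g' : ℝ → ℝ} {g'' : ℝ} (h1 : ∀ᶠ t in 𝓝 (0:ℝ), HasDerivAt g (g' t) t)
    (h2 : HasDerivAt g' g'' 0) (hm : IsLocalMax g 0) : g'' ≤ 0 := by
  by_contra hc
  push Not at hc
  have e : deriv g =ᶠ[𝓝 0] g' := h1.mono fun t ht => ht.deriv
  have e2 : deriv (deriv g) 0 = g'' := by rw [e.deriv_eq]; exact h2.deriv
  have hmin := isLocalMin_of_deriv_deriv_pos (f := g) (x₀ := 0) (by rw [e2]; exact hc)
    hm.deriv_eq_zero h1.self_of_nhds.continuousAt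
  have hcst : g =ᶠ[𝓝 0] fun _ => g 0 := by
    filter_upwards [hm, hmin] with t a b
    exact le_antisymm a b
  have e3 : deriv g =ᶠ[𝓝 0] deriv (fun _ => g 0) := hcst.deriv
  have e4 : deriv (deriv g) 0 = 0 := by rw [e3.deriv_eq]; simp
  linarith

lemma hessian_quad {n : ℕ} (u : Euc n → ℝ) (x w : Euc n) :
    ⟪w, Matrix.toEuclideanLin (hessian u x) w⟫ = fderiv ℝ (fderiv ℝ u) x w w := by
  have hw : w = ∑ i, w i • EuclideanSpace.single i (1:ℝ) := by
    ext j; simp [Finset.sum_apply, Pi.single_apply]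
  have e : fderiv ℝ (fderiv ℝ u) x w w = ∑ i, ∑ j, w i * w j * hessian u x i j := by
    conv_lhs => rw [hw]
    simp only [map_sum, map_smul, FunLike.coe_sum, Finset.sum_apply, FunLike.coe_smul, Pi.smul_apply, smul_eq_mul]
    simp only [Finset.mul_sum]
    rw [Finset.sum_comm]
    apply Finset.sum_congr rfl; intro i _
    apply Finset.sum_congr rfl; intro j _
    rw [hessian, iteratedFDeriv_two_apply]
    simp
    ring
  rw [e]
  simp [PiLp.inner_apply, Matrix.toLpLin_apply, Matrix.mulVec, dotProduct, Finset.sum_mul]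
  apply Finset.sum_congr rfl; intro i _
  apply Finset.sum_congr rfl; intro j _
  ring

def Good {n : ℕ} (k : ℕ) (u : Euc n → ℝ) (x : Euc n) : Prop :=
  ContDiffAt ℝ 2 u x ∧ InGardingCone k (hessian u x) ∧ sigmaMat k (hessian u x) = 1

lemma not_local_max_compare {n k : ℕ} (hk : 1 ≤ k) (hn : 0 < n) (u v : Euc n → ℝ)
    (R : Euc n ≃ₗᵢ[ℝ] Euc n) (K d c : ℝ) (hK : 1 ≤ K) (hd : 0 < d) (x : Euc n)
    (hu : Good k u x) (hv : Good k v (R x))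
    (hm : IsLocalMax (fun y => K * u y - v (R y) + d * ‖y‖^2) x) : False := by
  obtain ⟨hu1, ⟨hA, hu2⟩, hu3⟩ := hu
  obtain ⟨hv1, ⟨hB, hv2⟩, hv3⟩ := hv
  have q : ∀ w, K * ⟪w, Matrix.toEuclideanLin (hessian u x) w⟫ + (2*d) * ‖w‖^2
      ≤ ⟪R w, Matrix.toEuclideanLin (hessian v (R x)) (R w)⟫ := by
    intro w
    rw [hessian_quad, hessian_quad]
    obtain ⟨a1, a2⟩ := second_deriv_line u x w hu1
    obtain ⟨b1, b2⟩ := second_deriv_line v (R x) (R w) hv1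
    have n0 : (fun t : ℝ => d * ‖x + t • w‖^2) = fun t => d * (‖x‖^2 + 2 * t * ⟪x, w⟫ + t^2 * ‖w‖^2) := by
      funext t
      rw [norm_add_sq_real, real_inner_smul_right, norm_smul, mul_pow, Real.norm_eq_abs, sq_abs]; ring
    have c1 : ∀ t : ℝ, HasDerivAt (fun t : ℝ => d * ‖x + t • w‖^2) (d * (2 * ⟪x, w⟫ + 2 * t * ‖w‖^2)) t := by
      intro t
      rw [n0]
      have e1 : HasDerivAt (fun t : ℝ => 2 * t * ⟪x, w⟫) (2 * 1 * ⟪x, w⟫) t :=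
        ((hasDerivAt_id t).const_mul 2).mul_const _
      have e2 : HasDerivAt (fun t : ℝ => t^2 * ‖w‖^2) (2 * t * ‖w‖^2) t := by
        have := (hasDerivAt_pow 2 t).mul_const (‖w‖^2)
        simpa using this
      exact (((e1.const_add (‖x‖^2)).add e2).const_mul d).congr_deriv (by ring)
    have c2 : HasDerivAt (fun t : ℝ => d * (2 * ⟪x, w⟫ + 2 * t * ‖w‖^2)) (d * (2 * 1 * ‖w‖^2)) 0 :=
      ((((hasDerivAt_id (0:ℝ)).const_mul 2).mul_const _).const_add _).const_mul d
    have hmax : IsLocalMax (fun t : ℝ => K * u (x + t • w) - v (R x + t • R w) + d * ‖x + t • w‖^2) 0 := by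
      have hc : Tendsto (fun t : ℝ => x + t • w) (𝓝 0) (𝓝 x) := by
        have : ContinuousAt (fun t : ℝ => x + t • w) 0 := by fun_prop
        simpa [ContinuousAt] using this
      have := hc.eventually hm
      filter_upwards [this] with t ht
      simpa using ht
    have := local_max_second (g := fun t : ℝ => K * u (x + t • w) - v (R x + t • R w) + d * ‖x + t • w‖^2)
      (g' := fun t => K * fderiv ℝ u (x + t • w) w - fderiv ℝ v (R x + t • R w) (R w)
        + d * (2 * ⟪x, w⟫ + 2 * t * ‖w‖^2))
      (by filter_upwards [a1, b1] with t ha hb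
          exact ((ha.const_mul K).sub hb).add (c1 t))
      (((a2.const_mul K).sub b2).add c2) hmax
    linarith
  have hW := weyl_mat _ _ hA hB R K (2*d) (by linarith) q
  have hs := esymm_compare hk hn K hK (2*d) (by linarith) hA.eigenvalues hB.eigenvalues hW hu2
    (by rw [sigmaMat, dif_pos hA] at hu3; exact hu3)
  have : esymmVec k hB.eigenvalues = 1 := by rw [sigmaMat, dif_pos hB] at hv3; exact hv3
  linarith

lemma comparison {n k : ℕ} (hk : 1 ≤ k) (hn : 0 < n) (u v : Euc n → ℝ)
    (R : Euc n ≃ₗᵢ[ℝ] Euc n) (K c : ℝ) (hK : 1 ≤ K) (D : Set (Euc n)) (hDo : IsOpen D)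
    (hDb : IsBounded D) (hu : ∀ x ∈ D, Good k u x) (hv : ∀ x ∈ D, Good k v (R x))
    (huc : ContinuousOn u (closure D)) (hvc : ContinuousOn (fun x => v (R x)) (closure D))
    (hb : ∀ x ∈ closure D, x ∉ D → K * u x ≤ v (R x) + c) :
    ∀ x ∈ D, K * u x ≤ v (R x) + c := by
  intro x₁ hx₁
  by_contra hcon
  push Not at hcon
  obtain ⟨r, hr⟩ := hDb.closure.exists_norm_le
  set η := K * u x₁ - v (R x₁) - c with hη
  have hη0 : 0 < η := by rw [hη]; linarith
  set d := η / (r^2 + 1) with hd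
  have hd0 : 0 < d := by positivity
  have hdr : d * r^2 < η := by
    rw [hd, div_mul_eq_mul_div, div_lt_iff₀ (by positivity)]; nlinarith
  have hcomp : IsCompact (closure D) := Metric.isCompact_of_isClosed_isBounded isClosed_closure hDb.closure
  obtain ⟨x₀, hx₀, hmax⟩ := hcomp.exists_isMaxOn ⟨x₁, subset_closure hx₁⟩
    (f := fun y => K * u y - v (R y) + d * ‖y‖^2)
    (((huc.const_mul K).sub hvc).add (by fun_prop))
  have h1 : K * u x₁ - v (R x₁) + d * ‖x₁‖^2 ≤ K * u x₀ - v (R x₀) + d * ‖x₀‖^2 :=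
    hmax (subset_closure hx₁)
  by_cases hD : x₀ ∈ D
  · refine not_local_max_compare hk hn u v R K d c hK hd0 x₀ (hu _ hD) (hv _ hD) ?_
    exact hmax.isLocalMax (mem_of_superset (hDo.mem_nhds hD) subset_closure)
  · have h2 := hb x₀ hx₀ hD
    have h3 : ‖x₀‖^2 ≤ r^2 := pow_le_pow_left₀ (norm_nonneg _) (hr _ hx₀) 2
    have h4 : 0 ≤ d * ‖x₁‖^2 := by positivity
    nlinarith [mul_le_mul_of_nonneg_left h3 hd0.le]

lemma not_local_max {n k : ℕ} (hk : 1 ≤ k) (u : Euc n → ℝ) (x : Euc n)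
    (hu : Good k u x) (hm : IsLocalMax u x) : False := by
  obtain ⟨hu1, ⟨hA, hu2⟩, hu3⟩ := hu
  have h1 := hu2 1 le_rfl hk
  have q : ∀ w, ⟪w, Matrix.toEuclideanLin (hessian u x) w⟫ ≤ 0 := by
    intro w
    rw [hessian_quad]
    obtain ⟨a1, a2⟩ := second_deriv_line u x w hu1
    refine local_max_second a1 a2 ?_
    have hc : Tendsto (fun t : ℝ => x + t • w) (𝓝 0) (𝓝 x) := by
      have : ContinuousAt (fun t : ℝ => x + t • w) 0 := by fun_prop
      simpa [ContinuousAt] using this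
    filter_upwards [hc.eventually hm] with t ht
    simpa using ht
  have hev : ∀ i, hA.eigenvalues i ≤ 0 := by
    intro i
    have := weyl_mat (hessian u x) 0 hA Matrix.isHermitian_zero (LinearIsometryEquiv.refl ℝ _) 1 0
      (by norm_num) (by intro w; simpa using q w) i
    have e : (Matrix.isHermitian_zero (α := ℝ) (n := Fin n)).eigenvalues = 0 := by
      exact (Matrix.IsHermitian.eigenvalues_eq_zero_iff _).2 rfl
    rw [e] at this
    simpa using this
  have : esymmVec 1 hA.eigenvalues ≤ 0 := by
    unfold esymmVec
    apply Finset.sum_nonpos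
    intro S hS
    obtain ⟨a, rfl⟩ := Finset.card_eq_one.1 (Finset.mem_powersetCard.1 hS).2
    simpa using hev a
  linarith

lemma good_of_within {n k : ℕ} (u : Euc n → ℝ) (s : Set (Euc n)) (x : Euc n) (hs : s ∈ 𝓝 x)
    (hu : ContDiffOn ℝ 2 u s)
    (h : InGardingCone k (hessianWithin u s x) ∧ sigmaMat k (hessianWithin u s x) = 1) :
    Good k u x := by
  have e : hessianWithin u s x = hessian u x := by
    unfold hessianWithin hessian
    have : iteratedFDerivWithin ℝ 2 u s x = iteratedFDeriv ℝ 2 u x := by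
      rw [← iteratedFDerivWithin_univ]
      exact iteratedFDerivWithin_congr_set (by simpa [eventuallyEq_univ] using hs) 2
    rw [this]
  rw [e] at h
  exact ⟨hu.contDiffAt hs, h.1, h.2⟩

lemma exists_rot {n : ℕ} (i j : Fin n) (hij : i ≠ j) (θ : ℝ) : ∃ R : Euc n ≃ₗᵢ[ℝ] Euc n,
    ∀ x, R x = x + ((Real.cos θ - 1) * x i - Real.sin θ * x j) • EuclideanSpace.single i (1:ℝ)
      + (Real.sin θ * x i + (Real.cos θ - 1) * x j) • EuclideanSpace.single j (1:ℝ) := by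
  let f : Euc n →ₗ[ℝ] Euc n :=
    { toFun := fun x => x + ((Real.cos θ - 1) * x i - Real.sin θ * x j) • EuclideanSpace.single i (1:ℝ)
        + (Real.sin θ * x i + (Real.cos θ - 1) * x j) • EuclideanSpace.single j (1:ℝ)
      map_add' := by
        intro x y
        simp only [PiLp.add_apply]
        module
      map_smul' := by
        intro c x
        simp only [PiLp.smul_apply, smul_eq_mul, RingHom.id_apply]
        module }
  have hf : ∀ x, ‖f x‖ = ‖x‖ := by
    intro x
    have h : ‖f x‖^2 = ‖x‖^2 := by
      change ‖x + ((Real.cos θ - 1) * x i - Real.sin θ * x j) • EuclideanSpace.single i (1:ℝ)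
        + (Real.sin θ * x i + (Real.cos θ - 1) * x j) • EuclideanSpace.single j (1:ℝ)‖^2 = _
      rw [norm_add_sq_real, norm_add_sq_real, inner_add_left]
      simp only [real_inner_smul_left, real_inner_smul_right, norm_smul, mul_pow, Real.norm_eq_abs, sq_abs]
      simp [EuclideanSpace.inner_single_right, hij, hij.symm]
      have := Real.sin_sq_add_cos_sq θ
      have e : Real.sin θ ^ 2 = 1 - Real.cos θ ^ 2 := by linarith
      ring_nf
      rw [e]
      ring
    exact (sq_eq_sq₀ (norm_nonneg _) (norm_nonneg _)).1 h
  let g : Euc n →ₗᵢ[ℝ] Euc n := ⟨f, hf⟩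
  refine ⟨g.toLinearIsometryEquiv rfl, fun x => rfl⟩

lemma rot_dist {n : ℕ} (i j : Fin n) (θ : ℝ) (R : Euc n ≃ₗᵢ[ℝ] Euc n)
    (hR : ∀ x, R x = x + ((Real.cos θ - 1) * x i - Real.sin θ * x j) • EuclideanSpace.single i (1:ℝ)
      + (Real.sin θ * x i + (Real.cos θ - 1) * x j) • EuclideanSpace.single j (1:ℝ)) (x : Euc n) :
    ‖R x - x‖ ≤ 4 * |θ| * ‖x‖ := by
  have hs : |Real.sin θ| ≤ |θ| := Real.abs_sin_le_abs
  have hc : |Real.cos θ - 1| ≤ |θ| := by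
    have h1 := Real.cos_le_one θ
    have h2 := Real.one_sub_sq_div_two_le_cos (x := θ)
    have h3 := Real.neg_one_le_cos θ
    rw [abs_le]
    constructor
    · by_cases h : |θ| ≤ 2
      · have : θ^2 = |θ|^2 := (sq_abs θ).symm
        nlinarith [abs_nonneg θ]
      · linarith
    · linarith [abs_nonneg θ]
  have hi : |x i| ≤ ‖x‖ := by simpa using PiLp.norm_apply_le x i
  have hj : |x j| ≤ ‖x‖ := by simpa using PiLp.norm_apply_le x j
  rw [hR]
  have e : ∀ a b : Euc n, x + a + b - x = a + b := by intro a b; abel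
  rw [e]
  have t := abs_nonneg θ
  have k1 : |Real.cos θ - 1| * |x i| ≤ |θ| * ‖x‖ := mul_le_mul hc hi (abs_nonneg _) t
  have k2 : |Real.sin θ| * |x j| ≤ |θ| * ‖x‖ := mul_le_mul hs hj (abs_nonneg _) t
  have k3 : |Real.sin θ| * |x i| ≤ |θ| * ‖x‖ := mul_le_mul hs hi (abs_nonneg _) t
  have k4 : |Real.cos θ - 1| * |x j| ≤ |θ| * ‖x‖ := mul_le_mul hc hj (abs_nonneg _) t
  refine (norm_add_le _ _).trans ?_
  rw [norm_smul, norm_smul]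
  simp only [EuclideanSpace.norm_single, norm_one, mul_one, Real.norm_eq_abs]
  have a1 := abs_sub ((Real.cos θ - 1) * x i) (Real.sin θ * x j)
  have a2 := abs_add_le (Real.sin θ * x i) ((Real.cos θ - 1) * x j)
  rw [abs_mul, abs_mul] at a1 a2
  linarith

lemma ring_mem {n : ℕ} {Ω : Set (Euc n)} {ε : ℝ} {x : Euc n} (hx : x ∈ ringSet Ω 0 ε) :
    x ∈ closure Ω ∧ ε ≤ ‖x‖ := by
  refine ⟨closure_mono sdiff_subset hx, ?_⟩
  have : ringSet Ω 0 ε ⊆ {y | ε ≤ ‖y‖} := by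
    apply closure_minimal
    · intro y hy
      have := hy.2
      simp at this
      exact this.le
    · exact isClosed_le continuous_const continuous_norm
  exact this hx

lemma ring_isOpen {n : ℕ} {Ω : Set (Euc n)} (hΩ : IsOpen Ω) (ε : ℝ) :
    IsOpen (Ω \ closedBall (0 : Euc n) ε) := hΩ.sdiff isClosed_closedBall

lemma ring_uniqueDiff {n : ℕ} {Ω : Set (Euc n)} (hΩ : IsOpen Ω) (hc : Convex ℝ Ω) {ε ε₀ : ℝ}
    (hε : 0 < ε) (hεε : ε < ε₀) (hb : closedBall (0 : Euc n) ε₀ ⊆ Ω) :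
    UniqueDiffOn ℝ (ringSet Ω 0 ε) := by
  intro x hx
  obtain ⟨hxc, hxn⟩ := ring_mem hx
  have hop := ring_isOpen hΩ ε
  rcases hxn.eq_or_lt with h | h
  · -- on the sphere
    set t := (ε₀ - ε) / (2 * ε) with ht
    have ht0 : 0 < t := by
      apply div_pos <;> linarith
    have htε : t * ε = (ε₀ - ε) / 2 := by rw [ht]; field_simp
    have hsub : ball ((1 + t) • x) (t * ε) ⊆ Ω \ closedBall 0 ε := by
      intro y hy
      rw [mem_ball, dist_eq_norm] at hy
      have hn1 : ‖(1 + t) • x‖ = (1 + t) * ε := by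
        rw [norm_smul, Real.norm_of_nonneg (by linarith), h]
      have e1 : ‖y‖ ≤ ‖y - (1+t) • x‖ + ‖(1+t) • x‖ := by
        simpa using norm_add_le (y - (1+t) • x) ((1+t) • x)
      have e2 : ‖(1+t) • x‖ ≤ ‖y - (1+t) • x‖ + ‖y‖ := by
        have := norm_sub_le y (y - (1+t) • x)
        simp only [sub_sub_cancel] at this
        linarith
      constructor
      · apply hb
        rw [mem_closedBall, dist_zero_right]
        rw [hn1] at e1
        nlinarith
      · rw [mem_closedBall, dist_zero_right, not_le]
        rw [hn1] at e2
        nlinarith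
    have hr : t * ε ≠ 0 := by positivity
    have hu : UniqueDiffWithinAt ℝ (ball ((1 + t) • x) (t * ε)) x := by
      apply uniqueDiffWithinAt_convex (convex_ball _ _)
      · rw [isOpen_ball.interior_eq]; exact nonempty_ball.2 (by positivity)
      · rw [closure_ball _ hr, mem_closedBall, dist_eq_norm]
        have : x - (1+t) • x = -(t • x) := by module
        rw [this, norm_neg, norm_smul, Real.norm_of_nonneg ht0.le, h]
    exact hu.mono (hsub.trans subset_closure)
  · have hu : UniqueDiffWithinAt ℝ Ω x := by
      apply uniqueDiffWithinAt_convex hc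
      · rw [hΩ.interior_eq]
        exact ⟨0, hb (by simp; linarith)⟩
      · exact hxc
    have h2 : UniqueDiffWithinAt ℝ (Ω ∩ {y | ε < ‖y‖}) x :=
      hu.inter ((isOpen_lt continuous_const continuous_norm).mem_nhds h)
    refine h2.mono (Subset.trans ?_ subset_closure)
    intro y hy
    exact ⟨hy.1, by simpa using hy.2⟩

lemma rotate_compare {n k : ℕ} (hk : 1 ≤ k) (hn : 0 < n) {Ω : Set (Euc n)} (hΩ : IsOpen Ω)
    (hΩb : IsBounded Ω) {ε M L c : ℝ} {u : Euc n → ℝ} (hu : IsSol k Ω 0 ε M u) (hc0 : 0 ≤ c)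
    (hL : ∀ y ∈ ringSet Ω 0 ε, ∀ z ∈ frontier Ω, |u y| ≤ L * ‖y - z‖)
    (R : Euc n ≃ₗᵢ[ℝ] Euc n) (hR : ∀ y ∈ closure Ω, L * ‖R y - y‖ ≤ c) :
    ∀ x ∈ Ω, R x ∈ Ω → ε < ‖x‖ → u x ≤ u (R x) + c := by
  obtain ⟨h1, h2, h3, h4⟩ := hu
  have hop := ring_isOpen hΩ ε
  have hgood : ∀ x ∈ Ω \ closedBall (0 : Euc n) ε, Good k u x := fun x hx =>
    good_of_within u _ x (mem_of_superset (hop.mem_nhds hx) subset_closure) h1 (h2 x hx)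
  set D := (Ω \ closedBall (0 : Euc n) ε) ∩ R ⁻¹' (Ω \ closedBall (0 : Euc n) ε) with hD
  have cl1 : closure D ⊆ ringSet Ω 0 ε := closure_mono inter_subset_left
  have cl2 : ∀ x ∈ closure D, R x ∈ ringSet Ω 0 ε := by
    intro x hx
    have : x ∈ closure (R ⁻¹' (Ω \ closedBall (0 : Euc n) ε)) := closure_mono inter_subset_right hx
    exact R.continuous.closure_preimage_subset _ this
  have hcomp := comparison hk hn u u R 1 c le_rfl D (hop.inter (hop.preimage R.continuous))
    (hΩb.subset (fun x hx => hx.1.1)) (fun x hx => hgood x hx.1) (fun x hx => hgood _ hx.2)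
    (h1.continuousOn.mono cl1)
    (h1.continuousOn.comp R.continuous.continuousOn cl2) (by
      intro x hx hxD
      rw [one_mul]
      obtain ⟨a1, a2⟩ := ring_mem (cl1 hx)
      obtain ⟨b1, b2⟩ := ring_mem (cl2 x hx)
      have hRx := hR x a1
      rcases a2.eq_or_lt with h | h
      · rw [h4 x (by simp [h]), h4 (R x) (by simp [h])]; linarith
      · by_cases hx1 : x ∈ Ω
        · have hx2 : R x ∉ Ω := by
            intro hx2
            exact hxD ⟨⟨hx1, by simpa using h⟩, ⟨hx2, by simpa using h⟩⟩
          have hf : R x ∈ frontier Ω := by rw [hΩ.frontier_eq]; exact ⟨b1, hx2⟩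
          rw [h3 _ hf]
          have := hL x (cl1 hx) _ hf
          rw [norm_sub_rev] at this
          linarith [le_abs_self (u x)]
        · have hf : x ∈ frontier Ω := by rw [hΩ.frontier_eq]; exact ⟨a1, hx1⟩
          rw [h3 _ hf]
          have := hL _ (cl2 x hx) _ hf
          linarith [neg_abs_le (u (R x))])
  intro x hx hRx hxn
  have := hcomp x ⟨⟨hx, by simpa using hxn⟩, ⟨hRx, by simpa using hxn⟩⟩
  linarith

lemma sol_bounds {n k : ℕ} (hk : 1 ≤ k) (hn : 0 < n) {Ω : Set (Euc n)} (hΩ : IsOpen Ω)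
    (hΩb : IsBounded Ω) {ε M K : ℝ} {u ψ : Euc n → ℝ} (hu : IsSol k Ω 0 ε M u) (hM : 0 < M)
    (hψ : IsSol22 k Ω ψ) (hK : 1 ≤ K) (hKψ : ∀ x ∈ sphere (0 : Euc n) ε, K * ψ x ≤ -M) :
    ∀ x ∈ ringSet Ω 0 ε, K * ψ x ≤ u x ∧ u x ≤ 0 := by
  obtain ⟨h1, h2, h3, h4⟩ := hu
  obtain ⟨p1, p2, p3⟩ := hψ
  have hop := ring_isOpen hΩ ε
  have hgood : ∀ x ∈ Ω \ closedBall (0 : Euc n) ε, Good k u x := fun x hx =>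
    good_of_within u _ x (mem_of_superset (hop.mem_nhds hx) subset_closure) h1 (h2 x hx)
  have pgood : ∀ x ∈ Ω, Good k ψ x := fun x hx =>
    good_of_within ψ _ x (mem_of_superset (hΩ.mem_nhds hx) subset_closure)
      (p1.of_le (WithTop.coe_le_coe.2 (le_top : (2:ℕ∞) ≤ ⊤))) (p2 x hx)
  have hbd : IsBounded (Ω \ closedBall (0 : Euc n) ε) := hΩb.subset sdiff_subset
  have hcases : ∀ x ∈ ringSet Ω 0 ε, x ∉ Ω \ closedBall (0 : Euc n) ε →
      x ∈ frontier Ω ∨ x ∈ sphere (0 : Euc n) ε := by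
    intro x hx hxD
    obtain ⟨a1, a2⟩ := ring_mem hx
    by_cases hxΩ : x ∈ Ω
    · right
      by_contra hs
      apply hxD
      refine ⟨hxΩ, ?_⟩
      simp at hs ⊢
      exact lt_of_le_of_ne a2 (Ne.symm hs)
    · left; rw [hΩ.frontier_eq]; exact ⟨a1, hxΩ⟩
  have hbdry : ∀ x ∈ ringSet Ω 0 ε, x ∉ Ω \ closedBall (0 : Euc n) ε → K * ψ x ≤ u x ∧ u x ≤ 0 := by
    intro x hx hxD
    rcases hcases x hx hxD with h | h
    · rw [h3 x h, p3 x h]; simp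
    · rw [h4 x h]; exact ⟨hKψ x h, by linarith⟩
  intro x hx
  constructor
  · by_cases hxD : x ∈ Ω \ closedBall (0 : Euc n) ε
    · have := comparison hk hn ψ u (LinearIsometryEquiv.refl ℝ _) K 0 hK _ hop hbd
        (fun x hx => pgood x hx.1) (fun x hx => hgood x hx)
        (p1.continuousOn.mono (closure_mono sdiff_subset)) h1.continuousOn
        (fun y hy hyD => by simpa using (hbdry y hy hyD).1) x hxD
      simpa using this
    · exact (hbdry x hx hxD).1
  · have hcomp : IsCompact (ringSet Ω (0 : Euc n) ε) :=
      Metric.isCompact_of_isClosed_isBounded isClosed_closure hbd.closure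
    obtain ⟨x₀, hx₀, hmax⟩ := hcomp.exists_isMaxOn ⟨x, hx⟩ h1.continuousOn
    refine le_trans (hmax hx) ?_
    by_cases hxD : x₀ ∈ Ω \ closedBall (0 : Euc n) ε
    · exact (not_local_max hk u x₀ (hgood _ hxD)
        (hmax.isLocalMax (mem_of_superset (hop.mem_nhds hxD) subset_closure))).elim
    · exact (hbdry x₀ hx₀ hxD).2

lemma psi_neg {n k : ℕ} (hk : 1 ≤ k) {Ω : Set (Euc n)} (hΩ : IsOpen Ω)
    (hΩb : IsBounded Ω) {ψ : Euc n → ℝ} (hψ : IsSol22 k Ω ψ) : ∀ x ∈ Ω, ψ x < 0 := by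
  obtain ⟨p1, p2, p3⟩ := hψ
  have pgood : ∀ x ∈ Ω, Good k ψ x := fun x hx =>
    good_of_within ψ _ x (mem_of_superset (hΩ.mem_nhds hx) subset_closure)
      (p1.of_le (WithTop.coe_le_coe.2 (le_top : (2:ℕ∞) ≤ ⊤))) (p2 x hx)
  intro x hx
  have hcomp : IsCompact (closure Ω) :=
    Metric.isCompact_of_isClosed_isBounded isClosed_closure hΩb.closure
  obtain ⟨x₀, hx₀, hmax⟩ := hcomp.exists_isMaxOn ⟨x, subset_closure hx⟩ p1.continuousOn
  have hx₀Ω : x₀ ∉ Ω := fun h => not_local_max hk ψ x₀ (pgood _ h)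
    (hmax.isLocalMax (mem_of_superset (hΩ.mem_nhds h) subset_closure))
  have h0 : ψ x₀ = 0 := p3 x₀ (by rw [hΩ.frontier_eq]; exact ⟨hx₀, hx₀Ω⟩)
  by_contra hcon
  push Not at hcon
  refine not_local_max hk ψ x (pgood _ hx) ?_
  filter_upwards [hΩ.mem_nhds hx] with y hy
  have : ψ y ≤ ψ x₀ := hmax (subset_closure hy)
  linarith

lemma angular_bound_interior {n k : ℕ} (hk : 1 ≤ k) (hn : 0 < n) {Ω : Set (Euc n)} (hΩ : IsOpen Ω)
    (hΩb : IsBounded Ω) {ε M L r : ℝ} {u : Euc n → ℝ} (hu : IsSol k Ω 0 ε M u) (hL0 : 0 ≤ L)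
    (hr0 : 0 ≤ r) (hr : ∀ y ∈ closure Ω, ‖y‖ ≤ r)
    (hL : ∀ y ∈ ringSet Ω 0 ε, ∀ z ∈ frontier Ω, |u y| ≤ L * ‖y - z‖)
    (i j : Fin n) (hij : i ≠ j) (x : Euc n) (hx : x ∈ Ω \ closedBall (0 : Euc n) ε) :
    |x i * fderiv ℝ u x (EuclideanSpace.single j (1:ℝ))
      - x j * fderiv ℝ u x (EuclideanSpace.single i (1:ℝ))| ≤ 4 * L * r := by
  have hop := ring_isOpen hΩ ε
  choose R hR using exists_rot i j hij
  have hxn : ε < ‖x‖ := by simpa using hx.2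
  have hud : DifferentiableAt ℝ u x :=
    (hu.1.contDiffAt (mem_of_superset (hop.mem_nhds hx) subset_closure)).differentiableAt (by norm_num)
  have hcurve : HasDerivAt (fun θ => R θ x)
      ((-(x j)) • EuclideanSpace.single i (1:ℝ) + (x i) • EuclideanSpace.single j (1:ℝ)) 0 := by
    have e : (fun θ => R θ x) = fun θ => x + ((Real.cos θ - 1) * x i - Real.sin θ * x j) • EuclideanSpace.single i (1:ℝ)
      + (Real.sin θ * x i + (Real.cos θ - 1) * x j) • EuclideanSpace.single j (1:ℝ) := by
      funext θ; exact hR θ x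
    rw [e]
    have hc := (Real.hasDerivAt_cos 0).sub_const 1
    have hs := Real.hasDerivAt_sin 0
    have d1 := ((hc.mul_const (x i)).sub (hs.mul_const (x j))).smul_const (EuclideanSpace.single i (1:ℝ) : Euc n)
    have d2 := ((hs.mul_const (x i)).add (hc.mul_const (x j))).smul_const (EuclideanSpace.single j (1:ℝ) : Euc n)
    have := (d1.const_add x).add d2
    refine this.congr_deriv ?_
    simp
  have hR0 : R 0 x = x := by rw [hR]; simp
  have hder : HasDerivAt (fun θ => u (R θ x)) (x i * fderiv ℝ u x (EuclideanSpace.single j (1:ℝ))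
      - x j * fderiv ℝ u x (EuclideanSpace.single i (1:ℝ))) 0 := by
    have h0 : HasFDerivAt u (fderiv ℝ u x) (R 0 x) := by rw [hR0]; exact hud.hasFDerivAt
    refine (h0.comp_hasDerivAt (0:ℝ) hcurve).congr_deriv ?_
    simp
    ring
  have := hder.le_of_lip' (C := 4 * L * r) (by positivity) (by
    have hc : Tendsto (fun θ => R θ x) (𝓝 0) (𝓝 x) := by
      have := hcurve.continuousAt
      rwa [ContinuousAt, hR0] at this
    filter_upwards [hc.eventually (hΩ.mem_nhds hx.1)] with θ hθ
    have hbnd : ∀ y ∈ closure Ω, L * ‖R θ y - y‖ ≤ 4 * L * r * |θ| := by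
      intro y hy
      have h1 := rot_dist i j θ (R θ) (hR θ) y
      have h2 : 4 * |θ| * ‖y‖ ≤ 4 * |θ| * r := mul_le_mul_of_nonneg_left (hr y hy) (by positivity)
      calc L * ‖R θ y - y‖ ≤ L * (4 * |θ| * r) := mul_le_mul_of_nonneg_left (h1.trans h2) hL0
        _ = _ := by ring
    have hbnd' : ∀ y ∈ closure Ω, L * ‖(R θ).symm y - y‖ ≤ 4 * L * r * |θ| := by
      intro y hy
      have h1 := rot_dist i j θ (R θ) (hR θ) ((R θ).symm y)
      rw [(R θ).apply_symm_apply, (R θ).symm.norm_map, norm_sub_rev] at h1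
      have h2 : 4 * |θ| * ‖y‖ ≤ 4 * |θ| * r := mul_le_mul_of_nonneg_left (hr y hy) (by positivity)
      calc L * ‖(R θ).symm y - y‖ ≤ L * (4 * |θ| * r) := mul_le_mul_of_nonneg_left (h1.trans h2) hL0
        _ = _ := by ring
    have g1 := rotate_compare hk hn hΩ hΩb hu (c := 4 * L * r * |θ|) (by positivity) hL (R θ) hbnd
      x hx.1 hθ hxn
    have g2 := rotate_compare hk hn hΩ hΩb hu (c := 4 * L * r * |θ|) (by positivity) hL (R θ).symm hbnd'
      (R θ x) hθ (by simpa using hx.1) (by simpa using hxn)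
    rw [(R θ).symm_apply_apply] at g2
    rw [hR0, sub_zero, Real.norm_eq_abs, Real.norm_eq_abs, abs_le]
    constructor <;> linarith)
  simpa using this

/-- uniform bound on the angular derivatives `x_i ∂_j u − x_j ∂_i u`. -/
theorem statement8 {n k : ℕ} (hk : 1 ≤ k) (hkn : k ≤ n)
    (Ω₁ : Set (Euc n)) (hΩo : IsOpen Ω₁) (hΩconv : Convex ℝ Ω₁)
    (hΩb : IsBounded Ω₁) (hΩs : HasSmoothBoundary Ω₁)
    (ε₀ : ℝ) (hε₀ : 0 < ε₀) (hball : closedBall (0 : Euc n) ε₀ ⊆ Ω₁)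
    (ψ : Euc n → ℝ) (hψ : IsSol22 k Ω₁ ψ)
    (M₁ : ℝ) (hM₁ : 0 < M₁) (hM₁ψ : ∀ x ∈ closure Ω₁, -ψ x < M₁)
    (hM₁sub : ∀ ε ∈ Ioo (0:ℝ) ε₀, ∀ x ∈ frontier Ω₁, underSol k (0 : Euc n) ε M₁ x ≤ 0)
    (M : ℝ) (hM : M₁ < M)
 :
    ∃ C : ℝ, 0 < C ∧ ∀ ε ∈ Ioo (0:ℝ) ε₀, ∀ u : Euc n → ℝ,
      IsSol k Ω₁ (0 : Euc n) ε M u → ∀ i j : Fin n, i < j →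
        ∀ x ∈ ringSet Ω₁ (0 : Euc n) ε,
          |x i * fderivWithin ℝ u (ringSet Ω₁ (0 : Euc n) ε) x
              (EuclideanSpace.single j (1:ℝ)) -
            x j * fderivWithin ℝ u (ringSet Ω₁ (0 : Euc n) ε) x
              (EuclideanSpace.single i (1:ℝ))| ≤ C := by
  classical
  obtain ⟨r', hr'⟩ := hΩb.closure.exists_norm_le
  set r := max r' 0 with hrdef
  have hr0 : 0 ≤ r := le_max_right _ _
  have hr : ∀ y ∈ closure Ω₁, ‖y‖ ≤ r := fun y hy => (hr' y hy).trans (le_max_left _ _)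
  have hM0 : 0 < M := hM₁.trans hM
  have hneg := psi_neg hk hΩo hΩb hψ
  -- the constant K
  obtain ⟨K, hK1, hKψ⟩ : ∃ K : ℝ, 1 ≤ K ∧ ∀ x ∈ closedBall (0 : Euc n) ε₀, K * ψ x ≤ -M := by
    have hcomp : IsCompact (closedBall (0 : Euc n) ε₀) := isCompact_closedBall _ _
    obtain ⟨x₀, hx₀, hmax⟩ := hcomp.exists_isMaxOn ⟨0, by simp [hε₀.le]⟩
      (hψ.1.continuousOn.mono (hball.trans subset_closure))
    have h0 := hneg x₀ (hball hx₀)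
    refine ⟨max 1 (M / (-ψ x₀)), le_max_left _ _, fun x hx => ?_⟩
    have h1 : ψ x ≤ ψ x₀ := hmax hx
    have h2 : M / (-ψ x₀) ≤ max 1 (M / (-ψ x₀)) := le_max_right _ _
    rw [div_le_iff₀ (by linarith)] at h2
    have h3 : 0 < max 1 (M / (-ψ x₀)) := lt_of_lt_of_le one_pos (le_max_left _ _)
    nlinarith
  -- Lipschitz constant of ψ
  obtain ⟨L, hL0, hLψ⟩ : ∃ L : ℝ, 0 ≤ L ∧ ∀ y ∈ closure Ω₁, ∀ z ∈ closure Ω₁,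
      |ψ y - ψ z| ≤ L * ‖y - z‖ := by
    have hcomp : IsCompact (closure Ω₁) :=
      Metric.isCompact_of_isClosed_isBounded isClosed_closure hΩb.closure
    have hud : UniqueDiffOn ℝ (closure Ω₁) := by
      apply uniqueDiffOn_convex hΩconv.closure
      exact ⟨0, interior_mono subset_closure
        (by rw [hΩo.interior_eq]; exact hball (by simp [hε₀.le]))⟩
    have hcd := hψ.1.continuousOn_fderivWithin hud (by simp)
    obtain ⟨C, hC⟩ := hcomp.exists_bound_of_continuousOn hcd
    refine ⟨max C 0, le_max_right _ _, fun y hy z hz => ?_⟩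
    have := hΩconv.closure.norm_image_sub_le_of_norm_fderivWithin_le (𝕜 := ℝ) (f := ψ) (C := max C 0)
      (hψ.1.differentiableOn (by simp)) (fun w hw => (hC w hw).trans (le_max_left _ _)) hz hy
    simpa using this
  refine ⟨4 * (K * L) * r + 1, by positivity, ?_⟩
  intro ε hε u hu i j hij x hx
  have hn : 0 < n := i.pos
  have hbounds := sol_bounds hk hn hΩo hΩb hu hM0 hψ hK1
    (fun y hy => hKψ y (by
      simp only [mem_sphere, mem_closedBall] at hy ⊢
      rw [hy]; exact hε.2.le))
  have hLu : ∀ y ∈ ringSet Ω₁ 0 ε, ∀ z ∈ frontier Ω₁, |u y| ≤ (K * L) * ‖y - z‖ := by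
    intro y hy z hz
    obtain ⟨b1, b2⟩ := hbounds y hy
    have h1 := hLψ y (ring_mem hy).1 z (frontier_subset_closure hz)
    rw [hψ.2.2 z hz, sub_zero] at h1
    rw [abs_of_nonpos b2]
    have h2 := neg_abs_le (ψ y)
    have h3 : K * (-(L * ‖y - z‖)) ≤ K * ψ y :=
      mul_le_mul_of_nonneg_left (by linarith) (by linarith)
    nlinarith
  have hud := ring_uniqueDiff hΩo hΩconv hε.1 hε.2 hball
  have hcont := hu.1.continuousOn_fderivWithin hud (by norm_num)
  have hop := ring_isOpen hΩo ε
  have hint : ∀ y ∈ Ω₁ \ closedBall (0 : Euc n) ε,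
      |y i * fderivWithin ℝ u (ringSet Ω₁ (0 : Euc n) ε) y (EuclideanSpace.single j (1:ℝ)) -
        y j * fderivWithin ℝ u (ringSet Ω₁ (0 : Euc n) ε) y (EuclideanSpace.single i (1:ℝ))|
        ≤ 4 * (K * L) * r + 1 := by
    intro y hy
    rw [fderivWithin_of_mem_nhds (s := ringSet Ω₁ (0 : Euc n) ε) (mem_of_superset (hop.mem_nhds hy) subset_closure)]
    have := angular_bound_interior hk hn hΩo hΩb hu (by positivity) hr0 hr hLu i j hij.ne y hy
    linarith
  have hfc : ContinuousOn (fun y : Euc n =>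
      |y i * fderivWithin ℝ u (ringSet Ω₁ (0 : Euc n) ε) y (EuclideanSpace.single j (1:ℝ)) -
        y j * fderivWithin ℝ u (ringSet Ω₁ (0 : Euc n) ε) y (EuclideanSpace.single i (1:ℝ))|)
      (ringSet Ω₁ (0 : Euc n) ε) := by
    have c1 : ∀ i : Fin n, ContinuousOn (fun y : Euc n => y i) (ringSet Ω₁ (0 : Euc n) ε) := by
      intro i; fun_prop
    exact (((c1 i).mul (hcont.clm_apply continuousOn_const)).sub
      ((c1 j).mul (hcont.clm_apply continuousOn_const))).abs
  exact ContinuousWithinAt.closure_le (s := Ω₁ \ closedBall (0 : Euc n) ε) hx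
    ((hfc x hx).mono subset_closure) continuousWithinAt_const hint
end
end
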